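/- arXiv:1710.08225 — 2 statements merged into one kernel-verified Lean document; each statement's English description precedes it below -/
import Mathlib

section
/- Let N ≥ 1 and k ≥ 1. (1) If Ẽ^{N,k}_{D₁} = 0 (the zero polynomial), then D₀ has a k-Darbouxian first integral of degree ≤ N or a rational first integral of degree ≤ 2N+2d−1, and moreover such a first integral can be chosen defined over K. (2) Conversely, if D₀ has a rational first integral of degree ≤ N or a k-Darbouxian first integral of degree ≤ N, then Ẽ^{N,k}_{D₁} = 0. -/
/-!
# Darbouxian extactic curve theorem

`K` is a field of characteristic zero with algebraic closure `K̄`, `A, B ∈ K[x,y]` are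
coprime nonzero polynomials, `d = max(deg A, deg B) ≥ 1`, and `D₀ = A ∂x + B ∂y`.

We formalize:
(1) if the `N`-th `k`-Darbouxian extactic curve `Ẽ^{N,k}_{D₁}` is the zero polynomial, then
`D₀` has a `k`-Darbouxian first integral of degree ≤ N or a rational first integral of degree
≤ 2N+2d−1, and moreover such a first integral can be chosen defined over `K`;
(2) conversely, if `D₀` has a rational or a `k`-Darbouxian first integral of degree ≤ N then
`Ẽ^{N,k}_{D₁} = 0`.

A rational first integral of degree ≤ N is a nonconstant `F = p/q ∈ K̄(x,y)` with
`deg p, deg q ≤ N` and `D₀(F) = 0`, encoded by the (representation independent) polynomial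
identity `q·D₀(p) = p·D₀(q)` together with nonconstancy `p ≠ c·q`.
A `k`-Darbouxian first integral of degree ≤ N is a nonzero `G = p/q ∈ K̄(x,y)` with
`deg p, deg q ≤ N` and `D₀(G) = −k·A·∂y(B/A)·G`; since `A·∂y(B/A) = w₁/A` with
`w₁ = A·∂y(B) − B·∂y(A)`, this is encoded by `A·(q·D₀(p) − p·D₀(q)) = −k·w₁·p·q`.
-/

/-!
## Why the theorem holds

`D₁` preserves `K[x,y]` and `y₁^k K[x,y]`. On the first it acts as `D = A · D₀`, on the
coefficient of `y₁^k` in the second as `D + k w₁`, where `w₁ = A ∂y B - B ∂y A`. The extactic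
curve is thus a generalised Wronskian (`extactic1_eq`): row `i` consists of the elements `D^i b_j`
and `(D + k w₁)^i b_j`.

*Converse.* If `D₀(p) q = p D₀(q)`, then `q D^i p = p D^i q` for all `i`, so expanding `p` and `q`
in monomials gives a relation, with coefficients in `K̄[x,y]`, between the columns of the matrix;
it is nontrivial because `p / q` is nonconstant. The Darbouxian case is the same with the twisted
operator (`iterate_twist`, `extactic1_eq_zero_of_ratFI`, `extactic1_eq_zero_of_darbFI`). Forming
the extactic curve commutes with base change, so it vanishes over `K` as soon as it vanishes
over `K̄`.

*Direct implication.* Everything takes place over `K`, and the statement over `K̄` follows by base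
change. Let `δ` extend `D` to `F = K(x,y)` and let `E` be its field of constants. A vanishing
Wronskian gives a relation between the columns; one of minimal support
(`exists_minimal_relation`) has coefficients of the form `α a_j` and `β e_j` with `a_j, e_j ∈ E`
and `δ(β/α) = k w₁ β/α`. Hence there are `P, Q ∈ E[X,Y]` of degree at most `N`, not both zero, with
`α P(x,y) + β Q(x,y) = 0`.

If `P` or `Q` vanishes, the other is an algebraic dependency of `x, y` over `E`. Otherwise
`P(x,y)/Q(x,y) = -β/α`, so `x, y` are a zero of the polynomial `defect` of degree at most
`2N + 2d - 1` over `E` which expresses that `P / Q` satisfies the Darbouxian equation. If that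
polynomial is zero, clearing denominators and specialising the coefficients of `P` and `Q` at a
general point of `K²` gives a Darbouxian first integral over `K` (`hasDarbFI_of_defect_eq_zero`).

There remains a dependency `T ∈ E[X,Y]` of `x, y` of degree at most `M`
(`hasRatFI_of_dependency`). Replace it by a prime factor `R` which vanishes at `(x,y)`. As
`x, y` are independent over `K`, some ratio `c` of coefficients of `R` is not in `K`; it lies in
`E`, so `c = p / q` in lowest terms is a rational first integral. To bound its degree, note
that `R` divides `p(X) - c q(X)`, because `y` is transcendental over `E` and so `R` generates the
ideal of all dependencies (`prime_dvd_of_aeval_eq_zero`). By Gauss's lemma this lifts to a factor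
`R₂` of `G = q(x) p(X) - p(x) q(X)` in `K[x][X]`. The ratio `p / q` occurs among coefficients of
`R₂`, so `R₂` has degree at least `m = max (deg p) (deg q)` in `x`, which is the degree of
`G` in `x`; the complementary factor does not involve `x`, and by the antisymmetry of `G` under
the exchange of `x` and `X` it is constant. So `m = deg_X G = deg_X R₂ ≤ M`
(`degree_le_of_factor`).
-/

open MvPolynomial

namespace ExtacticPaper

noncomputable section

variable {L : Type*}

/-- `wPol A B r` equals `A^(r+1) * ∂y^r (B/A)` as a polynomial. -/
def wPol [CommRing L] (A B : MvPolynomial (Fin 2) L) : ℕ → MvPolynomial (Fin 2) L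
  | 0 => B
  | r + 1 => A * pderiv (1 : Fin 2) (wPol A B r) - (r + 1) • (wPol A B r * pderiv (1 : Fin 2) A)

/-- The derivation `D₀ = A ∂x + B ∂y` of `L[x,y]`. -/
def derD0 [CommRing L] (A B p : MvPolynomial (Fin 2) L) : MvPolynomial (Fin 2) L :=
  A * pderiv (0 : Fin 2) p + B * pderiv (1 : Fin 2) p

/-- Embedding of `L[x,y]` into `L[x,y,y₁]`. -/
def emb3 [CommSemiring L] (p : MvPolynomial (Fin 2) L) : MvPolynomial (Fin 3) L :=
  rename (Fin.castLE (by omega)) p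

/-- The derivation `D₁ = A² ∂x + A B ∂y + y₁ A² ∂y(B/A) ∂_{y₁}` of `L[x,y,y₁]`. -/
def derD1 [CommRing L] (A B : MvPolynomial (Fin 2) L) (p : MvPolynomial (Fin 3) L) :
    MvPolynomial (Fin 3) L :=
  emb3 A ^ 2 * pderiv (0 : Fin 3) p + emb3 A * emb3 B * pderiv (1 : Fin 3) p
    + X 2 * emb3 (wPol A B 1) * pderiv (2 : Fin 3) p

/-- Indexing set for the monomials of total degree at most `N` in two variables:
it has `(N+1)(N+2)/2` elements. -/
abbrev MonIdx (N : ℕ) := {p : Fin (N + 1) × Fin (N + 1) // (p.1 : ℕ) + (p.2 : ℕ) ≤ N}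

/-- The monomial basis of `L[x,y]_{≤ N}`. -/
def mon [CommSemiring L] {N : ℕ} (p : MonIdx N) : MvPolynomial (Fin 2) L :=
  X 0 ^ (p.1.1 : ℕ) * X 1 ^ (p.1.2 : ℕ)

/-- The basis `(b₁,…,b_l, y₁^k b₁,…, y₁^k b_l)` of `V₁ = L[x,y]_{≤N} ⊕ L[x,y]_{≤N} y₁^k`. -/
def basV1 [CommSemiring L] (k : ℕ) {N : ℕ} : MonIdx N ⊕ MonIdx N → MvPolynomial (Fin 3) L
  | .inl p => emb3 (mon p)
  | .inr p => X 2 ^ k * emb3 (mon p)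

/-- The `N`-th `k`-Darbouxian extactic curve `Ẽ^{N,k}_{D₁}`: the determinant of the
`l₁ × l₁` matrix whose `(i,j)` entry is `D₁^{i-1}(v_j)` specialized at `y₁ = 1`. -/
def extactic1 [CommRing L] (A B : MvPolynomial (Fin 2) L) (N k : ℕ) :
    MvPolynomial (Fin 2) L :=
  Matrix.det (Matrix.of fun i j : Fin (Fintype.card (MonIdx N ⊕ MonIdx N)) =>
    aeval ![X 0, X 1, 1]
      ((derD1 A B)^[(i : ℕ)] (basV1 k ((Fintype.equivFin (MonIdx N ⊕ MonIdx N)).symm j))))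

/-- `D₀` has a rational first integral of degree ≤ N (with witness over `L`). -/
def HasRatFI [Field L] (A B : MvPolynomial (Fin 2) L) (N : ℕ) : Prop :=
  ∃ p q : MvPolynomial (Fin 2) L, q ≠ 0 ∧ p.totalDegree ≤ N ∧ q.totalDegree ≤ N ∧
    q * derD0 A B p = p * derD0 A B q ∧ ∀ c : L, p ≠ C c * q

/-- `D₀` has a `k`-Darbouxian first integral of degree ≤ N (with witness over `L`):
a nonzero `G = p/q` with `D₀(G) = −k·A·∂y(B/A)·G`. -/
def HasDarbFI [Field L] (A B : MvPolynomial (Fin 2) L) (k N : ℕ) : Prop :=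
  ∃ p q : MvPolynomial (Fin 2) L, q ≠ 0 ∧ p ≠ 0 ∧ p.totalDegree ≤ N ∧ q.totalDegree ≤ N ∧
    A * (q * derD0 A B p - p * derD0 A B q)
      = -((k : MvPolynomial (Fin 2) L) * wPol A B 1 * p * q)

/-- Base change of a polynomial from `K` to the algebraic closure of `K`. -/
def mapAC {K : Type*} [Field K] (p : MvPolynomial (Fin 2) K) :
    MvPolynomial (Fin 2) (AlgebraicClosure K) :=
  MvPolynomial.map (algebraMap K (AlgebraicClosure K)) p

/-! ### The extactic matrix as a generalised Wronskian -/

section Operators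

variable [CommRing L]

/-- The derivation `A • D₀ = A² ∂x + A B ∂y` of `L[x,y]`, i.e. the restriction of `D₁` to
`L[x,y]`. -/
def dD (A B : MvPolynomial (Fin 2) L) :
    Derivation L (MvPolynomial (Fin 2) L) (MvPolynomial (Fin 2) L) :=
  A • (A • pderiv 0 + B • pderiv 1)

lemma dD_apply (A B p : MvPolynomial (Fin 2) L) : dD A B p = A * derD0 A B p := by
  simp only [dD, derD0, Derivation.smul_apply, Derivation.add_apply, smul_eq_mul]

lemma emb3_mul (p q : MvPolynomial (Fin 2) L) : emb3 (p * q) = emb3 p * emb3 q := by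
  simp [emb3]

lemma emb3_add (p q : MvPolynomial (Fin 2) L) : emb3 (p + q) = emb3 p + emb3 q := by
  simp [emb3]

lemma emb3_natCast (n : ℕ) : emb3 (n : MvPolynomial (Fin 2) L) = n := by
  simp [emb3]

lemma pderiv_emb3 (i : Fin 2) (p : MvPolynomial (Fin 2) L) :
    pderiv (Fin.castLE (by omega) i : Fin 3) (emb3 p) = emb3 (pderiv i p) := by
  unfold emb3
  exact pderiv_rename (Fin.castLE_injective _) _ _

lemma pderiv_two_emb3 (p : MvPolynomial (Fin 2) L) : pderiv (2 : Fin 3) (emb3 p) = 0 := by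
  classical
  apply pderiv_eq_zero_of_notMem_vars
  intro h
  have := vars_rename (Fin.castLE (by omega : 2 ≤ 3)) p h
  rw [Finset.mem_image] at this
  obtain ⟨a, -, ha⟩ := this
  fin_cases a <;> simp [Fin.ext_iff] at ha

lemma aeval_emb3 (p : MvPolynomial (Fin 2) L) :
    aeval ![X 0, X 1, (1 : MvPolynomial (Fin 2) L)] (emb3 p) = p := by
  unfold emb3
  rw [aeval_rename]
  have : (![X 0, X 1, (1 : MvPolynomial (Fin 2) L)] ∘ Fin.castLE (by omega : 2 ≤ 3)) = X := by
    funext i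
    fin_cases i <;> rfl
  rw [this, aeval_X_left_apply]

/-- On `y₁^k L[x,y]` the derivation `D₁` acts as the first-order operator
`A • D₀ + k w₁` on the coefficient of `y₁^k`. -/
lemma derD1_X_pow_mul (A B p : MvPolynomial (Fin 2) L) (k : ℕ) :
    derD1 A B (X 2 ^ k * emb3 p)
      = X 2 ^ k * emb3 (dD A B p + ((k : MvPolynomial (Fin 2) L) * wPol A B 1) * p) := by
  have h0 := pderiv_emb3 (L := L) 0 p
  have h1 := pderiv_emb3 (L := L) 1 p
  simp only [show (Fin.castLE (by omega) (0 : Fin 2) : Fin 3) = 0 from rfl,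
    show (Fin.castLE (by omega) (1 : Fin 2) : Fin 3) = 1 from rfl] at h0 h1
  have hX0 : pderiv (0 : Fin 3) (X 2 ^ k : MvPolynomial (Fin 3) L) = 0 := by
    rw [pderiv_pow, pderiv_X_of_ne (by decide), mul_zero]
  have hX1 : pderiv (1 : Fin 3) (X 2 ^ k : MvPolynomial (Fin 3) L) = 0 := by
    rw [pderiv_pow, pderiv_X_of_ne (by decide), mul_zero]
  have hX2 : X 2 * pderiv (2 : Fin 3) (X 2 ^ k : MvPolynomial (Fin 3) L)
      = (k : MvPolynomial (Fin 3) L) * X 2 ^ k := by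
    rw [pderiv_pow, pderiv_X_self]
    rcases k with _ | k
    · simp
    · simp only [Nat.add_sub_cancel]; ring
  rw [dD_apply]
  simp only [derD1, derD0, pderiv_mul, pderiv_two_emb3, h0, h1, hX0, hX1, emb3_add, emb3_mul,
    emb3_natCast]
  linear_combination (emb3 (wPol A B 1) * emb3 p) * hX2

lemma derD1_emb3 (A B p : MvPolynomial (Fin 2) L) : derD1 A B (emb3 p) = emb3 (dD A B p) := by
  simpa using derD1_X_pow_mul A B p 0

/-- The zeroth-order term `u` of the operator `A • D₀ + u` by which `D₁` acts on the
`y₁`-homogeneous component of the given basis vector. -/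
def wt (A B : MvPolynomial (Fin 2) L) (k : ℕ) {N : ℕ} :
    MonIdx N ⊕ MonIdx N → MvPolynomial (Fin 2) L
  | .inl _ => 0
  | .inr _ => k * wPol A B 1

/-- The coefficient in `L[x,y]` of a basis vector of `V₁`. -/
def bs {N : ℕ} : MonIdx N ⊕ MonIdx N → MvPolynomial (Fin 2) L := Sum.elim mon mon

lemma entry_eq (A B : MvPolynomial (Fin 2) L) (k : ℕ) {N : ℕ} (s : MonIdx N ⊕ MonIdx N) (i : ℕ) :
    aeval ![X 0, X 1, (1 : MvPolynomial (Fin 2) L)] ((derD1 A B)^[i] (basV1 k s))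
      = (fun f => dD A B f + wt A B k s * f)^[i] (bs s) := by
  rcases s with p | p
  · have : ∀ i (f : MvPolynomial (Fin 2) L),
        (derD1 A B)^[i] (emb3 f) = emb3 ((fun f => dD A B f + 0 * f)^[i] f) := by
      intro i
      induction i with
      | zero => intro f; rfl
      | succ i ih =>
        intro f
        rw [Function.iterate_succ_apply, Function.iterate_succ_apply, derD1_emb3, ih]
        simp
    simp only [basV1, wt, bs, this, aeval_emb3, Sum.elim_inl]
  · have : ∀ i (f : MvPolynomial (Fin 2) L), (derD1 A B)^[i] (X 2 ^ k * emb3 f)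
        = X 2 ^ k * emb3 ((fun f => dD A B f + (k * wPol A B 1) * f)^[i] f) := by
      intro i
      induction i with
      | zero => intro f; rfl
      | succ i ih =>
        intro f
        rw [Function.iterate_succ_apply, Function.iterate_succ_apply, derD1_X_pow_mul, ih]
    simp only [basV1, wt, bs, this, map_mul, aeval_emb3, Sum.elim_inr, map_pow, aeval_X]
    simp

lemma extactic1_eq (A B : MvPolynomial (Fin 2) L) (N k : ℕ) :
    extactic1 A B N k = Matrix.det (Matrix.of
      fun i j : Fin (Fintype.card (MonIdx N ⊕ MonIdx N)) =>
      (fun f => dD A B f + wt A B k ((Fintype.equivFin (MonIdx N ⊕ MonIdx N)).symm j) * f)^[(i : ℕ)]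
        (bs ((Fintype.equivFin (MonIdx N ⊕ MonIdx N)).symm j))) := by
  unfold extactic1
  congr 1
  ext i j : 2
  simp only [Matrix.of_apply]
  rw [entry_eq]

end Operators

/-! ### Base change -/

section BaseChange

variable {R S : Type*} [CommRing R] [CommRing S] (φ : R →+* S)

lemma derD0_map (A B p : MvPolynomial (Fin 2) R) :
    derD0 (map φ A) (map φ B) (map φ p) = map φ (derD0 A B p) := by
  simp [derD0, pderiv_map]

lemma dD_map (A B p : MvPolynomial (Fin 2) R) :
    dD (map φ A) (map φ B) (map φ p) = map φ (dD A B p) := by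
  simp [dD_apply, derD0_map]

lemma wPol_one_map (A B : MvPolynomial (Fin 2) R) :
    wPol (map φ A) (map φ B) 1 = map φ (wPol A B 1) := by
  simp [wPol, pderiv_map]

lemma mon_map {N : ℕ} (p : MonIdx N) : map φ (mon p) = mon p := by
  simp [mon]

lemma extactic1_map (A B : MvPolynomial (Fin 2) R) (N k : ℕ) :
    extactic1 (map φ A) (map φ B) N k = map φ (extactic1 A B N k) := by
  rw [extactic1_eq, extactic1_eq, RingHom.map_det]
  congr 1
  refine Matrix.ext fun i j => ?_
  simp only [Matrix.of_apply, RingHom.mapMatrix_apply, Matrix.map_apply]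
  generalize (Fintype.equivFin (MonIdx N ⊕ MonIdx N)).symm j = s
  have hw : wt (map φ A) (map φ B) k s = map φ (wt A B k s) := by
    rcases s with p | p <;> simp [wt, wPol_one_map]
  have hb : (bs s : MvPolynomial (Fin 2) S) = map φ (bs s) := by
    rcases s with p | p <;> simp [bs, mon_map]
  rw [hb]
  have := (Function.Semiconj.iterate_right (f := map φ)
    (ga := fun f => dD A B f + wt A B k s * f)
    (gb := fun f => dD (map φ A) (map φ B) f + wt (map φ A) (map φ B) k s * f)
    (fun f => by simp [dD_map, hw]) (i : ℕ)) (bs s)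
  exact this.symm

end BaseChange

/-! ### Polynomials as linear combinations of the monomial basis -/

section Combinations

/-- The exponent vector of the monomial indexed by `p`. -/
def expo {N : ℕ} (p : MonIdx N) : Fin 2 →₀ ℕ :=
  Finsupp.single 0 (p.1.1 : ℕ) + Finsupp.single 1 (p.1.2 : ℕ)

variable [CommRing L]

lemma mon_eq {N : ℕ} (p : MonIdx N) : (mon p : MvPolynomial (Fin 2) L) = monomial (expo p) 1 := by
  simp [mon, expo, X_pow_eq_monomial, monomial_mul]

lemma expo_injective {N : ℕ} : Function.Injective (expo (N := N)) := by
  rintro ⟨⟨a, b⟩, h⟩ ⟨⟨a', b'⟩, h'⟩ e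
  have e0 := DFunLike.congr_fun e 0
  have e1 := DFunLike.congr_fun e 1
  simp [expo] at e0 e1
  simp [Fin.ext_iff, e0, e1]

lemma exists_expo {N : ℕ} (s : Fin 2 →₀ ℕ) (h : s 0 + s 1 ≤ N) : ∃ p : MonIdx N, expo p = s := by
  refine ⟨⟨(⟨s 0, by omega⟩, ⟨s 1, by omega⟩), h⟩, ?_⟩
  ext i
  fin_cases i <;> simp [expo]

/-- The polynomial of degree at most `N` with given coefficients. -/
def polyOf {N : ℕ} (a : MonIdx N → L) : MvPolynomial (Fin 2) L := ∑ j, C (a j) * mon j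

lemma coeff_polyOf {N : ℕ} (a : MonIdx N → L) (i : MonIdx N) :
    coeff (expo i) (polyOf a) = a i := by
  classical
  simp [polyOf, mon_eq, coeff_sum, coeff_C_mul, coeff_monomial, expo_injective.eq_iff]

lemma totalDegree_polyOf_le {N : ℕ} (a : MonIdx N → L) : (polyOf a).totalDegree ≤ N := by
  refine totalDegree_finsetSum_le fun j _ => ?_
  rw [mon_eq, C_mul_monomial, mul_one]
  refine (totalDegree_monomial_le _ _).trans ?_
  have := j.2
  simp [expo, Finsupp.sum_fintype, Fin.sum_univ_two]
  exact this

lemma polyOf_ne_zero {N : ℕ} {a : MonIdx N → L} {i : MonIdx N} (h : a i ≠ 0) : polyOf a ≠ 0 :=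
  fun e => h (by rw [← coeff_polyOf a i, e, coeff_zero])

lemma eq_polyOf {N : ℕ} (p : MvPolynomial (Fin 2) L) (h : p.totalDegree ≤ N) :
    p = polyOf (fun j : MonIdx N => coeff (expo j) p) := by
  ext s
  by_cases hs : s 0 + s 1 ≤ N
  · obtain ⟨j, rfl⟩ := exists_expo s hs
    rw [coeff_polyOf]
  · have key : ∀ q : MvPolynomial (Fin 2) L, q.totalDegree ≤ N → coeff s q = 0 := by
      intro q hq
      apply coeff_eq_zero_of_totalDegree_lt
      have : ∑ i ∈ s.support, s i = s 0 + s 1 := by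
        have := Finsupp.sum_fintype s (fun _ n => n) (by simp)
        rw [Fin.sum_univ_two] at this
        exact this
      omega
    rw [key p h, key _ (totalDegree_polyOf_le _)]

end Combinations

/-! ### First integrals give relations between the columns -/

section Converse

/-- In cross-multiplied form: if `(D + u) p / D q = p / q`, then `(D + u)^i p / D^i q = p / q` for
all `i`. This turns a first integral `p / q` into a relation between the columns of the extactic
matrix. -/
lemma iterate_twist [CommRing L] [IsDomain L] (D : Derivation L (MvPolynomial (Fin 2) L)
      (MvPolynomial (Fin 2) L)) (u p q : MvPolynomial (Fin 2) L) (hq : q ≠ 0)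
    (h : q * (D p + u * p) = p * D q) (i : ℕ) :
    q * (fun f => D f + u * f)^[i] p = p * D^[i] q := by
  induction i with
  | zero => simp [mul_comm]
  | succ i ih =>
    rw [Function.iterate_succ_apply', Function.iterate_succ_apply']
    set P := (fun f => D f + u * f)^[i] p
    set Q := D^[i] q
    have hd : D (q * P) = D (p * Q) := by rw [ih]
    simp only [Derivation.leibniz, smul_eq_mul] at hd
    apply mul_left_cancel₀ hq
    linear_combination q * hd + (q * u - D q) * ih + Q * h

lemma extactic1_eq_zero_of_relation [Field L] (A B : MvPolynomial (Fin 2) L) (N k : ℕ)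
    (e : MonIdx N ⊕ MonIdx N → MvPolynomial (Fin 2) L) (he : e ≠ 0)
    (h : ∀ i : ℕ, ∑ s, (fun f => dD A B f + wt A B k s * f)^[i] (bs s) * e s = 0) :
    extactic1 A B N k = 0 := by
  rw [extactic1_eq, ← Matrix.exists_mulVec_eq_zero_iff]
  refine ⟨e ∘ (Fintype.equivFin _).symm, ?_, ?_⟩
  · intro h0
    apply he
    funext s
    simpa using congr_fun h0 (Fintype.equivFin _ s)
  · funext i
    simp only [Matrix.mulVec, dotProduct, Matrix.of_apply, Function.comp, Pi.zero_apply]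
    rw [← h i]
    exact (Fintype.equivFin (MonIdx N ⊕ MonIdx N)).symm.sum_comp
      (fun s => (fun f => dD A B f + wt A B k s * f)^[(i : ℕ)] (bs s) * e s)

lemma sum_iterate [CommRing L] (D : Derivation L (MvPolynomial (Fin 2) L)
      (MvPolynomial (Fin 2) L)) (u p : MvPolynomial (Fin 2) L) {N : ℕ} (hp : p.totalDegree ≤ N)
    (i : ℕ) :
    ∑ j : MonIdx N, (fun f => D f + u * f)^[i] (mon j) * C (coeff (expo j) p)
      = (fun f => D f + u * f)^[i] p := by
  conv_rhs => rw [eq_polyOf p hp]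
  let T : MvPolynomial (Fin 2) L →ₗ[L] MvPolynomial (Fin 2) L :=
    (D : MvPolynomial (Fin 2) L →ₗ[L] MvPolynomial (Fin 2) L) + LinearMap.mulLeft L u
  have hT : ∀ f, (fun f => D f + u * f)^[i] f = (T ^ i) f := by
    intro f
    rw [Module.End.pow_apply]
    rfl
  simp only [hT, polyOf, map_sum]
  refine Finset.sum_congr rfl fun j _ => ?_
  rw [← smul_eq_C_mul, map_smul, smul_eq_C_mul, mul_comm]

/-- The relation has coefficients `q p_j - p q_j` on the columns `b_j`. -/
lemma extactic1_eq_zero_of_ratFI [Field L] (A B : MvPolynomial (Fin 2) L) (N k : ℕ)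
    (h : HasRatFI A B N) : extactic1 A B N k = 0 := by
  obtain ⟨p, q, hq, hpN, hqN, hpq, hc⟩ := h
  have hit := iterate_twist (dD A B) 0 p q hq (by
    rw [dD_apply, dD_apply]; linear_combination A * hpq)
  refine extactic1_eq_zero_of_relation A B N k
    (Sum.elim (fun j => q * C (coeff (expo j) p) - p * C (coeff (expo j) q)) 0) ?_ ?_
  · intro h0
    have h1 : ∀ j : MonIdx N, q * C (coeff (expo j) p) = p * C (coeff (expo j) q) := fun j =>
      sub_eq_zero.1 (by simpa using congr_fun h0 (.inl j))
    -- a nonzero coefficient of `q` would exhibit `p` as a constant multiple of `q`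
    have : ∃ j : MonIdx N, coeff (expo j) q ≠ 0 := by
      by_contra! hall
      apply hq
      rw [eq_polyOf q hqN]
      simp [polyOf, hall]
    obtain ⟨j, hj⟩ := this
    apply hc (coeff (expo j) p * (coeff (expo j) q)⁻¹)
    rw [C_mul, mul_right_comm, mul_comm _ q, h1 j, mul_assoc, ← C_mul, mul_inv_cancel₀ hj, C_1,
      mul_one]
  · intro i
    have hp := sum_iterate (dD A B) 0 p hpN i
    have hq' := sum_iterate (dD A B) 0 q hqN i
    have h3 := hit i
    have h4 : (fun f => dD A B f + 0 * f) = dD A B := by funext f; simp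
    rw [h4] at hp hq' h3
    simp only [Fintype.sum_sum_type, Sum.elim_inl, Sum.elim_inr, Pi.zero_apply, mul_zero,
      Finset.sum_const_zero, add_zero, wt, bs]
    rw [show (fun f => dD A B f + 0 * f) = dD A B from h4]
    simp only [mul_sub, Finset.sum_sub_distrib, mul_left_comm _ q, mul_left_comm _ p,
      ← Finset.mul_sum, hp, hq', h3, sub_self]

/-- The relation has coefficients `p q_j` on the columns `b_j` and `-q p_j` on the columns
`y₁^k b_j`. -/
lemma extactic1_eq_zero_of_darbFI [Field L] (A B : MvPolynomial (Fin 2) L) (N k : ℕ)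
    (h : HasDarbFI A B k N) : extactic1 A B N k = 0 := by
  obtain ⟨p, q, hq, hp0, hpN, hqN, hpq⟩ := h
  have hit := iterate_twist (dD A B) (k * wPol A B 1) p q hq (by
    rw [dD_apply, dD_apply]; linear_combination hpq)
  refine extactic1_eq_zero_of_relation A B N k
    (Sum.elim (fun j => p * C (coeff (expo j) q)) (fun j => - (q * C (coeff (expo j) p)))) ?_ ?_
  · intro h0
    apply hq
    rw [eq_polyOf q hqN]
    have h1 : ∀ j : MonIdx N, coeff (expo j) q = 0 := fun j => by
      have := congr_fun h0 (.inl j)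
      simpa [hp0] using this
    simp [polyOf, h1]
  · intro i
    have hp := sum_iterate (dD A B) (k * wPol A B 1) p hpN i
    have hq' := sum_iterate (dD A B) 0 q hqN i
    have h3 := hit i
    have h4 : (fun f => dD A B f + 0 * f) = dD A B := by funext f; simp
    rw [h4] at hq'
    simp only [Fintype.sum_sum_type, Sum.elim_inl, Sum.elim_inr, wt, bs]
    rw [show (fun f => dD A B f + 0 * f) = dD A B from h4]
    simp only [mul_neg, Finset.sum_neg_distrib, mul_left_comm _ q, mul_left_comm _ p,
      ← Finset.mul_sum, hp, hq', h3, add_neg_cancel]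

end Converse

/-! ### Degree bounds -/

section Degrees

variable [CommRing L]

lemma totalDegree_pderiv_le (i : Fin 2) (p : MvPolynomial (Fin 2) L) :
    (pderiv i p).totalDegree ≤ p.totalDegree - 1 := by
  refine Finset.sup_le fun m hm => ?_
  have h : m + Finsupp.single i 1 ∈ p.support := by
    rw [mem_support_iff, coeff_pderiv] at hm
    exact mem_support_iff.2 (left_ne_zero_of_mul hm)
  have h2 := le_totalDegree h
  rw [Finsupp.sum_add_index' (fun _ => rfl) (fun _ _ _ => rfl),
    Finsupp.sum_single_index rfl] at h2
  omega

lemma totalDegree_mul_pderiv_le {d n : ℕ} (i : Fin 2) {A p : MvPolynomial (Fin 2) L}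
    (hA : A.totalDegree ≤ d) (hp : p.totalDegree ≤ n) :
    (A * pderiv i p).totalDegree ≤ d + (n - 1) := by
  have h1 := totalDegree_mul A (pderiv i p)
  have h2 := totalDegree_pderiv_le i p
  omega

lemma totalDegree_add_le {n : ℕ} {p q : MvPolynomial (Fin 2) L} (hp : p.totalDegree ≤ n)
    (hq : q.totalDegree ≤ n) : (p + q).totalDegree ≤ n :=
  (totalDegree_add p q).trans (max_le hp hq)

lemma totalDegree_sub_le {n : ℕ} {p q : MvPolynomial (Fin 2) L} (hp : p.totalDegree ≤ n)
    (hq : q.totalDegree ≤ n) : (p - q).totalDegree ≤ n :=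
  (totalDegree_sub p q).trans (max_le hp hq)

lemma totalDegree_derD0_le {d n : ℕ} {A B p : MvPolynomial (Fin 2) L}
    (hA : A.totalDegree ≤ d) (hB : B.totalDegree ≤ d) (hp : p.totalDegree ≤ n) :
    (derD0 A B p).totalDegree ≤ d + (n - 1) :=
  totalDegree_add_le (totalDegree_mul_pderiv_le _ hA hp) (totalDegree_mul_pderiv_le _ hB hp)

lemma totalDegree_wPol_one_le {d : ℕ} {A B : MvPolynomial (Fin 2) L}
    (hA : A.totalDegree ≤ d) (hB : B.totalDegree ≤ d) :
    (wPol A B 1).totalDegree ≤ d + (d - 1) := by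
  have : wPol A B 1 = A * pderiv 1 B - B * pderiv 1 A := by simp [wPol]
  rw [this]
  exact totalDegree_sub_le (totalDegree_mul_pderiv_le _ hA hB) (totalDegree_mul_pderiv_le _ hB hA)

/-- The polynomial whose vanishing says that `P / Q` is a solution `g` of
`A · D₀(g) = k · w₁ · g`, i.e. that `Q / P` is a `k`-Darbouxian first integral. -/
def defect (A B : MvPolynomial (Fin 2) L) (k : ℕ) (P Q : MvPolynomial (Fin 2) L) :
    MvPolynomial (Fin 2) L :=
  Q * dD A B P - P * dD A B Q - k * wPol A B 1 * P * Q

lemma totalDegree_defect_le {d n k : ℕ} {A B P Q : MvPolynomial (Fin 2) L}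
    (hd : 1 ≤ d) (hn : 1 ≤ n) (hA : A.totalDegree ≤ d) (hB : B.totalDegree ≤ d)
    (hP : P.totalDegree ≤ n) (hQ : Q.totalDegree ≤ n) :
    (defect A B k P Q).totalDegree ≤ 2 * n + 2 * d - 1 := by
  have key : ∀ {P Q : MvPolynomial (Fin 2) L}, P.totalDegree ≤ n → Q.totalDegree ≤ n →
      (Q * dD A B P).totalDegree ≤ 2 * n + 2 * d - 1 := by
    intro P Q hP hQ
    rw [dD_apply]
    have h1 := totalDegree_mul Q (A * derD0 A B P)
    have h2 := totalDegree_mul A (derD0 A B P)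
    have h3 := totalDegree_derD0_le hA hB hP
    omega
  refine totalDegree_sub_le (totalDegree_sub_le (key hP hQ) (key hQ hP)) ?_
  have h1 := totalDegree_mul ((k : MvPolynomial (Fin 2) L) * wPol A B 1 * P) Q
  have h2 := totalDegree_mul ((k : MvPolynomial (Fin 2) L) * wPol A B 1) P
  have h3 := totalDegree_mul (k : MvPolynomial (Fin 2) L) (wPol A B 1)
  have h4 : (k : MvPolynomial (Fin 2) L).totalDegree = 0 := by
    rw [← map_natCast (C (σ := Fin 2) (R := L)), totalDegree_C]
  have h5 := totalDegree_wPol_one_le hA hB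
  omega

lemma totalDegree_map_le' {R S : Type*} [CommRing R] [CommRing S] (φ : R →+* S)
    (p : MvPolynomial (Fin 2) R) : (map φ p).totalDegree ≤ p.totalDegree :=
  Finset.sup_mono (support_map_subset φ p)

lemma defect_map {R S : Type*} [CommRing R] [CommRing S] (φ : R →+* S) (k : ℕ)
    (A B P Q : MvPolynomial (Fin 2) R) :
    defect (map φ A) (map φ B) k (map φ P) (map φ Q) = map φ (defect A B k P Q) := by
  simp [defect, dD_map, wPol_one_map]

end Degrees

/-! ### First integrals under field extensions -/

section FieldExtension

lemma HasRatFI.mono [Field L] {A B : MvPolynomial (Fin 2) L} {m n : ℕ} (h : HasRatFI A B m)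
    (hmn : m ≤ n) : HasRatFI A B n := by
  obtain ⟨p, q, hq, hp, hq', h1, h2⟩ := h
  exact ⟨p, q, hq, hp.trans hmn, hq'.trans hmn, h1, h2⟩

variable {K E : Type*} [Field K] [Field E] (φ : K →+* E)

lemma HasDarbFI.map {A B : MvPolynomial (Fin 2) K} {k n : ℕ} (h : HasDarbFI A B k n) :
    HasDarbFI (MvPolynomial.map φ A) (MvPolynomial.map φ B) k n := by
  obtain ⟨p, q, hq, hp, hpn, hqn, h1⟩ := h
  have hφ := map_injective (σ := Fin 2) φ φ.injective
  refine ⟨MvPolynomial.map φ p, MvPolynomial.map φ q, (map_ne_zero_iff _ hφ).2 hq,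
    (map_ne_zero_iff _ hφ).2 hp, (totalDegree_map_le' _ _).trans hpn,
    (totalDegree_map_le' _ _).trans hqn, ?_⟩
  simpa [derD0_map, wPol_one_map] using congr_arg (MvPolynomial.map φ) h1

lemma HasRatFI.map {A B : MvPolynomial (Fin 2) K} {n : ℕ} (h : HasRatFI A B n) :
    HasRatFI (MvPolynomial.map φ A) (MvPolynomial.map φ B) n := by
  obtain ⟨p, q, hq, hpn, hqn, h1, h2⟩ := h
  have hφ := map_injective (σ := Fin 2) φ φ.injective
  refine ⟨MvPolynomial.map φ p, MvPolynomial.map φ q, (map_ne_zero_iff _ hφ).2 hq,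
    (totalDegree_map_le' _ _).trans hpn, (totalDegree_map_le' _ _).trans hqn, ?_, ?_⟩
  · simpa [derD0_map] using congr_arg (MvPolynomial.map φ) h1
  · intro c hc
    -- the constant of proportionality is a quotient of coefficients, hence lies in `K`
    obtain ⟨s, hs⟩ := ne_zero_iff.1 hq
    have hc' : c = φ (coeff s p / coeff s q) := by
      have := congr_arg (coeff s) hc
      rw [coeff_C_mul, coeff_map, coeff_map] at this
      rw [map_div₀, this, mul_div_cancel_right₀ _ ((map_ne_zero φ).2 hs)]
    apply h2 (coeff s p / coeff s q)
    apply hφ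
    rw [hc, hc', map_mul, map_C]

end FieldExtension

/-! ### Relations of minimal support -/

section Wronskian

/-- Kernel lemma for Wronskian-type determinants. The rows are the iterates of the operators
`δ + u_j` applied to `v_j`. If the determinant vanishes, the relations between the columns
contain a nonzero subspace stable under the adjoint operators `δ - u_j`; an element of minimal
support in it, normalised to be `1` at `j₀`, satisfies `δ c_j = (u_j - u_{j₀}) c_j`. -/
lemma exists_minimal_relation {F ι : Type*} [Field F] [Fintype ι] {n : ℕ} (e : Fin n ≃ ι)
    (δ : Derivation ℤ F F) (u v : ι → F)
    (hdet : Matrix.det (Matrix.of fun i j : Fin n =>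
      (fun f => δ f + u (e j) * f)^[(i : ℕ)] (v (e j))) = 0) :
    ∃ c : ι → F, c ≠ 0 ∧ ∑ j, c j * v j = 0 ∧
      ∀ j₀, c j₀ ≠ 0 → ∀ j, δ (c j / c j₀) = (u j - u j₀) * (c j / c j₀) := by
  classical
  set r : ℕ → ι → F := fun i j => (fun f => δ f + u j * f)^[i] (v j) with hr
  have hr1 : ∀ i j, r (i + 1) j = δ (r i j) + u j * r i j := fun i j =>
    Function.iterate_succ_apply' _ _ _
  let W : ℕ → Submodule F (ι → F) := fun m =>
    { carrier := {c | ∀ i < m, ∑ j, c j * r i j = 0}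
      add_mem' := by
        intro a b ha hb i hi
        simp [add_mul, Finset.sum_add_distrib, ha i hi, hb i hi]
      zero_mem' := by intro i _; simp
      smul_mem' := by
        intro a b hb i hi
        simp [mul_assoc, ← Finset.mul_sum, hb i hi] }
  have hW : ∀ m c, c ∈ W m ↔ ∀ i < m, ∑ j, c j * r i j = 0 := fun _ _ => Iff.rfl
  have hanti : ∀ m, W (m + 1) ≤ W m := fun m c hc i hi => hc i (by omega)
  have hn : W n ≠ ⊥ := by
    obtain ⟨a, ha, h0⟩ := Matrix.exists_mulVec_eq_zero_iff.2 hdet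
    intro hbot
    apply ha
    have hmem : a ∘ e.symm ∈ W n := by
      intro i hi
      have := congr_fun h0 ⟨i, hi⟩
      simp only [Matrix.mulVec, dotProduct, Matrix.of_apply, Pi.zero_apply] at this
      rw [← this, ← e.sum_comp]
      refine Finset.sum_congr rfl fun j _ => ?_
      simp [hr, mul_comm]
    rw [hbot, Submodule.mem_bot] at hmem
    funext j
    simpa using congr_fun hmem (e j)
  -- a strictly decreasing chain `W 0 > W 1 > ...` would reach `⊥` at step `n`
  have hcard : Fintype.card ι = n := by simpa using (Fintype.card_congr e).symm
  have hstab : ∃ m, W m ≠ ⊥ ∧ W m ≤ W (m + 1) := by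
    by_contra! hno
    have hlow : ∀ m ≤ n, W m ≠ ⊥ := by
      intro m hm hb
      apply hn
      have : Antitone W := antitone_nat_of_succ_le hanti
      exact le_bot_iff.1 (hb ▸ this hm)
    have : ∀ m ≤ n, Module.finrank F (W m) + m ≤ n := by
      intro m
      induction m with
      | zero =>
        intro _
        have := Submodule.finrank_le (W 0)
        rw [Module.finrank_pi, hcard] at this
        simpa using this
      | succ m ih =>
        intro hm
        have h1 := ih (by omega)
        have h2 : W (m + 1) < W m := lt_of_le_not_ge (hanti m) (hno m (hlow m (by omega)))
        have h3 := Submodule.finrank_lt_finrank_of_lt h2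
        omega
    have h4 := this n le_rfl
    exact hn (Submodule.finrank_eq_zero.1 (by omega))
  obtain ⟨m, hm0, hm1⟩ := hstab
  have hadj : ∀ c ∈ W m, (fun j => δ (c j) - u j * c j) ∈ W m := by
    intro c hc i hi
    have h1 : ∑ j, c j * r i j = 0 := hc i hi
    have h2 : ∑ j, c j * r (i + 1) j = 0 := hm1 hc (i + 1) (by omega)
    have h3 := congr_arg δ h1
    rw [map_sum, map_zero] at h3
    have h4 : ∑ j, (δ (c j) - u j * c j) * r i j
        = ∑ j, δ (c j * r i j) - ∑ j, c j * r (i + 1) j := by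
      rw [← Finset.sum_sub_distrib]
      refine Finset.sum_congr rfl fun j _ => ?_
      rw [hr1, Derivation.leibniz, smul_eq_mul, smul_eq_mul]
      ring
    rw [h4, h2, h3, sub_zero]
  have hex : ∃ t, ∃ c ∈ W m, c ≠ 0 ∧ (Finset.univ.filter fun j => c j ≠ 0).card = t := by
    obtain ⟨c, hc, hc0⟩ := (Submodule.ne_bot_iff _).1 hm0
    exact ⟨_, c, hc, hc0, rfl⟩
  obtain ⟨c, hc, hc0, hct⟩ := Nat.find_spec hex
  refine ⟨c, hc0, ?_, ?_⟩
  · exact hm1 hc 0 (by omega)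
  · intro j₀ hj₀
    set c' : ι → F := fun j => c j / c j₀ with hc'
    have hc'W : c' ∈ W m := by
      have : c' = (c j₀)⁻¹ • c := by funext j; simp [hc', div_eq_inv_mul]
      rw [this]
      exact Submodule.smul_mem _ _ hc
    set b : ι → F := fun j => δ (c' j) - (u j - u j₀) * c' j with hb
    have hbW : b ∈ W m := by
      have : b = (fun j => δ (c' j) - u j * c' j) + u j₀ • c' := by
        funext j; simp [hb]; ring
      rw [this]
      exact Submodule.add_mem _ (hadj _ hc'W) (Submodule.smul_mem _ _ hc'W)
    have hb0 : b = 0 := by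
      by_contra hne
      refine Nat.find_min hex (m := (Finset.univ.filter fun j => b j ≠ 0).card) ?_
        ⟨b, hbW, hne, rfl⟩
      rw [← hct]
      apply Finset.card_lt_card
      refine (Finset.ssubset_iff_of_subset ?_).2 ⟨j₀, by simpa using hj₀, ?_⟩
      · intro j hj
        simp only [Finset.mem_filter, Finset.mem_univ, true_and] at hj ⊢
        intro h
        apply hj
        simp [hb, hc', h]
      · simp [hb, hc', hj₀]
    intro j
    have := congr_fun hb0 j
    exact sub_eq_zero.1 this

/-- A derivation of a domain extends to its field of fractions. The extension is read off from
the ring homomorphism `a ↦ a + ε D a` into the dual numbers, which sends nonzero elements to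
units. -/
lemma exists_derivation_fractionRing {k R F : Type*} [Field k] [CommRing R] [IsDomain R]
    [Algebra k R] [Field F] [Algebra R F] [IsFractionRing R F] [Algebra k F] [IsScalarTower k R F]
    (D : Derivation k R R) :
    ∃ δ : Derivation k F F, ∀ a, δ (algebraMap R F a) = algebraMap R F (D a) := by
  let φ : R →+* TrivSqZeroExt F F :=
    { toFun := fun a => .inl (algebraMap R F a) + .inr (algebraMap R F (D a))
      map_one' := by
        apply TrivSqZeroExt.ext <;> simp
      map_mul' := by
        intro a b
        apply TrivSqZeroExt.ext <;> simp [-DualNumber.inr_eq_smul_eps, mul_comm]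
      map_zero' := by
        apply TrivSqZeroExt.ext <;> simp
      map_add' := by
        intro a b
        apply TrivSqZeroExt.ext <;> simp [-DualNumber.inr_eq_smul_eps] }
  have hφ1 : ∀ a, (φ a).fst = algebraMap R F a := fun a => by simp [φ]
  have hφ2 : ∀ a, (φ a).snd = algebraMap R F (D a) := fun a => by simp [φ, -DualNumber.inr_eq_smul_eps]
  have hφ : ∀ y : nonZeroDivisors R, IsUnit (φ y) := by
    intro y
    rw [TrivSqZeroExt.isUnit_iff_isUnit_fst, hφ1]
    exact IsLocalization.map_units F y
  let ψ : F →+* TrivSqZeroExt F F := IsLocalization.lift hφ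
  have hψ : ∀ a, ψ (algebraMap R F a) = φ a := IsLocalization.lift_eq hφ
  have hfst : ∀ f, (ψ f).fst = f := by
    have : ((TrivSqZeroExt.fstHom F F F).toRingHom.comp ψ) = RingHom.id F := by
      apply IsLocalization.ringHom_ext (nonZeroDivisors R)
      ext a
      simp [hψ, hφ1]
    intro f
    exact congr_fun (congr_arg DFunLike.coe this) f
  have hsc : ∀ t : k, (ψ (algebraMap k F t)).snd = 0 := by
    intro t
    rw [IsScalarTower.algebraMap_apply k R F, hψ, hφ2]
    simp
  refine ⟨Derivation.mk' { toFun := fun f => (ψ f).snd, map_add' := by simp, map_smul' := ?_ } ?_,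
    ?_⟩
  · intro t f
    rw [Algebra.smul_def, map_mul, TrivSqZeroExt.snd_mul, hsc, hfst, hfst]
    simp [Algebra.smul_def]
  · intro a b
    change (ψ (a * b)).snd = a * (ψ b).snd + b * (ψ a).snd
    rw [map_mul, TrivSqZeroExt.snd_mul, hfst, hfst]
    simp [mul_comm]
  · intro a
    change (ψ _).snd = _
    rw [hψ, hφ2]

end Wronskian

/-! ### Polynomials vanishing at a point of a field extension -/

section Vanishing

lemma transcendental_of_derivation {C F : Type*} [Field C] [CharZero C] [Field F] [Algebra C F]
    (δ : Derivation C F F) {y : F} (hy : δ y ≠ 0) : Transcendental C y := by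
  intro halg
  have hsep : (minpoly C y).Separable := (minpoly.irreducible halg.isIntegral).separable
  have h := δ.map_aeval (minpoly C y) y
  rw [minpoly.aeval, map_zero, smul_eq_mul, eq_comm, mul_eq_zero] at h
  exact h.elim (hsep.aeval_derivative_ne_zero (minpoly.aeval _ _)) hy

/-- Pseudo-division by a polynomial `T` of minimal degree among those vanishing at `x`. -/
lemma exists_dvd_C_mul {S F : Type*} [CommRing S] [IsDomain S] [Field F] (φ : S →+* F)
    (x : F) {T : Polynomial S} (hT0 : T ≠ 0) (hT : T.eval₂ φ x = 0)
    (hmin : ∀ g : Polynomial S, g ≠ 0 → g.eval₂ φ x = 0 → T.degree ≤ g.degree)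
    (g : Polynomial S) (hg : g.eval₂ φ x = 0) :
    ∃ a : S, a ≠ 0 ∧ T ∣ Polynomial.C a * g := by
  induction h : g.degree using WellFoundedLT.induction generalizing g with
  | ind n ih =>
    subst h
    by_cases hg0 : g = 0
    · exact ⟨1, one_ne_zero, by simp [hg0]⟩
    have hle := hmin g hg0 hg
    have hlT := Polynomial.leadingCoeff_ne_zero.2 hT0
    have hlg := Polynomial.leadingCoeff_ne_zero.2 hg0
    set g₁ := Polynomial.C T.leadingCoeff * g with hg₁
    set g₂ := Polynomial.C g.leadingCoeff * Polynomial.X ^ (g.natDegree - T.natDegree) * T with hg₂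
    have hd1 : g₁.degree = g.degree := by rw [hg₁, Polynomial.degree_C_mul hlT]
    have hnat := Polynomial.natDegree_le_natDegree hle
    have hd2 : g₂.degree = g.degree := by
      rw [hg₂, Polynomial.degree_mul, Polynomial.degree_C_mul hlg, Polynomial.degree_X_pow,
        Polynomial.degree_eq_natDegree hT0, Polynomial.degree_eq_natDegree hg0]
      norm_cast
      omega
    have hlt : (g₁ - g₂).degree < g.degree := by
      rw [← hd1]
      refine Polynomial.degree_sub_lt_left (hd1.trans hd2.symm) ?_ ?_
      · exact mul_ne_zero (Polynomial.C_ne_zero.2 hlT) hg0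
      · rw [hg₁, hg₂, Polynomial.leadingCoeff_mul, Polynomial.leadingCoeff_mul,
          Polynomial.leadingCoeff_mul, Polynomial.leadingCoeff_C, Polynomial.leadingCoeff_C,
          Polynomial.leadingCoeff_X_pow, mul_one, mul_comm]
    obtain ⟨a, ha, h⟩ := ih _ hlt (g₁ - g₂) (by simp [hg₁, hg₂, Polynomial.eval₂_mul, hT, hg]) rfl
    refine ⟨a * T.leadingCoeff, mul_ne_zero ha hlT, ?_⟩
    have h2 : Polynomial.C (a * T.leadingCoeff) * g
        = Polynomial.C a * (g₁ - g₂) + Polynomial.C a * g₂ := by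
      rw [map_mul, hg₁]; ring
    rw [h2]
    exact dvd_add h ((Dvd.intro_left _ rfl).mul_left _)

lemma exists_eq_C_of_dvd_C {S : Type*} [CommRing S] [IsDomain S] {T : Polynomial S} {a : S}
    (ha : a ≠ 0) (h : T ∣ Polynomial.C a) : ∃ t, T = Polynomial.C t := by
  have h1 := Polynomial.natDegree_le_of_dvd h (Polynomial.C_ne_zero.2 ha)
  rw [Polynomial.natDegree_C, Nat.le_zero] at h1
  exact ⟨_, Polynomial.eq_C_of_natDegree_eq_zero h1⟩

/-- Over a domain `S` embedded in a field, a prime polynomial vanishing at `x` divides every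
polynomial vanishing at `x`. -/
lemma prime_dvd_of_eval₂_eq_zero {S F : Type*} [CommRing S] [IsDomain S] [Field F] {φ : S →+* F}
    (hφ : Function.Injective φ) (x : F) {R : Polynomial S} (hR : Prime R)
    (hRx : R.eval₂ φ x = 0) (g : Polynomial S) (hg : g.eval₂ φ x = 0) : R ∣ g := by
  obtain ⟨T, ⟨hT0, hT⟩, hmin⟩ := WellFounded.has_min
    (InvImage.wf Polynomial.degree (wellFounded_lt (α := WithBot ℕ)))
    {T : Polynomial S | T ≠ 0 ∧ T.eval₂ φ x = 0} ⟨R, hR.ne_zero, hRx⟩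
  have hconst : ∀ t : S, (Polynomial.C t).eval₂ φ x = 0 → t = 0 := fun t ht => by
    rw [Polynomial.eval₂_C] at ht
    exact (map_eq_zero_iff φ hφ).1 ht
  have hdiv := exists_dvd_C_mul φ x hT0 hT (fun g h0 h1 => not_lt.1 (hmin g ⟨h0, h1⟩))
  have hRT : R ∣ T := by
    obtain ⟨a, ha, q, hq⟩ := hdiv R hRx
    rcases hR.dvd_or_dvd (Dvd.intro_left _ hq) with h | ⟨q', rfl⟩
    · exact h
    · have h1 : Polynomial.C a = T * q' := by
        apply mul_right_cancel₀ hR.ne_zero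
        rw [hq]; ring
      obtain ⟨t, rfl⟩ := exists_eq_C_of_dvd_C ha (Dvd.intro _ h1.symm)
      exact absurd (by rw [hconst t hT, map_zero]) hT0
  obtain ⟨b, hb, h⟩ := hdiv g hg
  rcases hR.dvd_or_dvd (hRT.trans h) with h | h
  · obtain ⟨t, rfl⟩ := exists_eq_C_of_dvd_C hb h
    exact absurd (by rw [hconst t hRx, map_zero]) hR.ne_zero
  · exact h

lemma prime_dvd_of_aeval_eq_zero {C F : Type*} [Field C] [Field F] [Algebra C F] {x y : F}
    (hy : Transcendental C y) {R : MvPolynomial (Fin 2) C} (hR : Prime R)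
    (hRx : aeval ![x, y] R = 0) (g : MvPolynomial (Fin 2) C) (hg : aeval ![x, y] g = 0) :
    R ∣ g := by
  have hφ : Function.Injective (aeval (R := C) (fun _ : Fin 1 => y)) :=
    algebraicIndependent_unique_type_iff.2 hy
  have hev : ∀ p : MvPolynomial (Fin 2) C, aeval ![x, y] p
      = (finSuccEquiv C 1 p).eval₂ (aeval (R := C) (fun _ : Fin 1 => y)).toRingHom x := by
    intro p
    induction p using MvPolynomial.induction_on with
    | C a => simp [finSuccEquiv_apply]
    | add p q hp hq => simp [hp, hq, Polynomial.eval₂_add]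
    | mul_X p i hp =>
      rw [map_mul, map_mul, Polynomial.eval₂_mul, hp]
      congr 1
      fin_cases i
      · simp [finSuccEquiv_X_zero]
      · have : (finSuccEquiv C 1) (X 1) = Polynomial.C (X 0) := finSuccEquiv_X_succ (j := 0)
        simp [this]
  have := prime_dvd_of_eval₂_eq_zero (φ := (aeval (R := C) (fun _ : Fin 1 => y)).toRingHom) hφ x
    (R := finSuccEquiv C 1 R) ((MulEquiv.prime_iff (finSuccEquiv C 1)).2 hR) ((hev R) ▸ hRx)
    (finSuccEquiv C 1 g) ((hev g) ▸ hg)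
  exact (map_dvd_iff (finSuccEquiv C 1)).1 this

end Vanishing

/-! ### Factors of `q(x) p(X) - p(x) q(X)` -/

section Factor

/-- A factorisation of a constant multiple of `G` comes from a factorisation of `G` itself. -/
lemma exists_strip_C {σ R : Type*} [CommRing R] [IsDomain R] [UniqueFactorizationMonoid R]
    (e : R) (he : e ≠ 0) (U V G : MvPolynomial σ R) (h : U * V = C e * G) :
    ∃ f₁ f₂ : R, ∃ U' V', U = C f₁ * U' ∧ V = C f₂ * V' ∧ U' * V' = G := by
  induction e using UniqueFactorizationMonoid.induction_on_prime generalizing U V with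
  | h₁ => exact absurd rfl he
  | h₂ u hu =>
    obtain ⟨w, rfl⟩ := hu
    refine ⟨1, w, U, C (↑w⁻¹ : R) * V, by simp, ?_, ?_⟩
    · rw [← mul_assoc, ← C_mul]; simp
    · rw [mul_left_comm, h, ← mul_assoc, ← C_mul]; simp
  | h₃ a p ha hp ih =>
    have hC : Prime (C p : MvPolynomial σ R) := (prime_C_iff σ).2 hp
    have hdvd : C p ∣ U * V := by rw [h, C_mul, mul_assoc]; exact Dvd.intro _ rfl
    rcases hC.dvd_or_dvd hdvd with ⟨U₀, rfl⟩ | ⟨V₀, rfl⟩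
    · obtain ⟨f₁, f₂, U', V', rfl, rfl, h'⟩ := ih ha U₀ V (by
        apply mul_left_cancel₀ hC.ne_zero
        rw [← mul_assoc, h, C_mul, mul_assoc])
      exact ⟨p * f₁, f₂, U', V', by rw [C_mul, mul_assoc], rfl, h'⟩
    · obtain ⟨f₁, f₂, U', V', rfl, rfl, h'⟩ := ih ha U V₀ (by
        apply mul_left_cancel₀ hC.ne_zero
        rw [mul_left_comm, h, C_mul, mul_assoc])
      exact ⟨f₁, p * f₂, U', V', rfl, by rw [C_mul, mul_assoc], h'⟩

lemma exists_clear_denominators {σ R F : Type*} [CommRing R] [IsDomain R] [Field F] [Algebra R F]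
    [IsFractionRing R F] (P : MvPolynomial σ F) :
    ∃ b : R, b ≠ 0 ∧ ∃ P₁ : MvPolynomial σ R,
      map (algebraMap R F) P₁ = C (algebraMap R F b) * P := by
  let _ : Algebra (MvPolynomial σ R) (MvPolynomial σ F) := algebraMvPolynomial
  obtain ⟨⟨P₁, ⟨_, b, hb, rfl⟩⟩, h⟩ :=
    IsLocalization.surj (M := (nonZeroDivisors R).map (C (σ := σ))) P
  refine ⟨b, nonZeroDivisors.ne_zero hb, P₁, ?_⟩
  simp only [algebraMap_def, map_C] at h
  rw [← h, mul_comm]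

lemma coeff_coeff_commAlgEquiv {R : Type*} [CommRing R] {σ τ : Type*} (a : τ →₀ ℕ) (b : σ →₀ ℕ)
    (p : MvPolynomial σ (MvPolynomial τ R)) :
    coeff b (coeff a (commAlgEquiv R σ τ p)) = coeff a (coeff b p) := by
  classical
  induction p using MvPolynomial.induction_on' with
  | add p q hp hq => simp [hp, hq]
  | monomial s c =>
    induction c using MvPolynomial.induction_on' with
    | add p q hp hq => simp [hp, hq]
    | monomial t r =>
      have : commAlgEquiv R σ τ (monomial s (monomial t r)) = monomial t (monomial s r) := by
        simp [commAlgEquiv, monomial]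
      rw [this]
      simp only [coeff_monomial]
      split_ifs <;> simp_all [coeff_monomial]

lemma totalDegree_coeff_le {R : Type*} [CommRing R] {σ τ : Type*} (b : σ →₀ ℕ)
    (p : MvPolynomial σ (MvPolynomial τ R)) :
    (coeff b p).totalDegree ≤ (commAlgEquiv R σ τ p).totalDegree := by
  refine Finset.sup_mono fun a ha => ?_
  rw [mem_support_iff] at ha ⊢
  intro h
  apply ha
  rw [← coeff_coeff_commAlgEquiv, h, coeff_zero]

/-- If `R₂` divides `q(x) p(X) - p(x) q(X)` and one of its coefficient ratios is `p(x)/q(x)`, with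
`p, q` coprime and not proportional, then `R₂` has degree at least `max (deg p) (deg q)` in the
variables `X`. -/
lemma degree_le_of_factor {K σ : Type*} [Field K] {p q : MvPolynomial σ K}
    (hq : q ≠ 0) (hpq : IsRelPrime p q) (hne : ∀ c : K, p ≠ C c * q)
    {R₂ S₂ : MvPolynomial σ (MvPolynomial σ K)}
    (hG : R₂ * S₂ = C q * map C p - C p * map C q) {s t : σ →₀ ℕ}
    (hst : q * coeff t R₂ = p * coeff s R₂) (hs : coeff s R₂ ≠ 0) :
    p.totalDegree ≤ R₂.totalDegree ∧ q.totalDegree ≤ R₂.totalDegree := by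
  set τ := commAlgEquiv K σ σ with hτ
  set G := C q * map C p - C p * map C q with hGdef
  have hp : p ≠ 0 := fun h => hne 0 (by simp [h])
  have ht : coeff t R₂ ≠ 0 := by
    intro h
    rw [h, mul_zero, eq_comm, mul_eq_zero] at hst
    exact hst.elim hp hs
  -- two indices witnessing that `p` and `q` are not proportional
  obtain ⟨j, hj⟩ := ne_zero_iff.1 hq
  obtain ⟨i, hi⟩ : ∃ i, coeff i p * coeff j q - coeff j p * coeff i q ≠ 0 := by
    by_contra! h
    apply hne (coeff j p / coeff j q)
    ext i
    rw [coeff_C_mul, div_mul_eq_mul_div, eq_div_iff hj]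
    exact sub_eq_zero.1 (h i)
  have hGc : ∀ l, coeff l G = q * C (coeff l p) - p * C (coeff l q) := by
    intro l; simp [hGdef, coeff_C_mul, coeff_map]
  have hG1 : q * C (coeff i p * coeff j q - coeff j p * coeff i q)
      = C (coeff j q) * coeff i G - C (coeff i q) * coeff j G := by
    simp only [hGc, C_sub, C_mul]; ring
  have hG2 : p * C (coeff i p * coeff j q - coeff j p * coeff i q)
      = C (coeff j p) * coeff i G - C (coeff i p) * coeff j G := by
    simp only [hGc, C_sub, C_mul]; ring
  have hG0 : G ≠ 0 := by
    intro h
    rw [h] at hG1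
    simp only [coeff_zero, mul_zero, sub_zero] at hG1
    exact (mul_ne_zero hq ((C_ne_zero).2 hi)) hG1
  have hR0 : R₂ ≠ 0 := fun h => hs (by rw [h, coeff_zero])
  have hS0 : S₂ ≠ 0 := fun h => hG0 (by rw [← hG, h, mul_zero])
  have hτ0 : ∀ {W}, W ≠ 0 → τ W ≠ 0 := fun h => (map_ne_zero_iff _ τ.injective).2 h
  -- exchanging the two groups of variables changes the sign of `G`
  have hτC : ∀ w : MvPolynomial σ K, τ (map C w) = C w := by
    intro w
    induction w using MvPolynomial.induction_on with
    | C a =>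
      ext1 u
      ext1 v
      rw [hτ, coeff_coeff_commAlgEquiv]
      classical
      simp only [map_C, coeff_C]
      split_ifs <;> simp_all
    | add p q hp hq => simp [hp, hq]
    | mul_X w l hw => rw [map_mul, map_mul, hw, map_X, hτ, commAlgEquiv_X, C_mul]
  have hτG : τ G = -G := by
    rw [hGdef, map_sub, map_mul, map_mul, hτC, hτC, hτ, commAlgEquiv_C, commAlgEquiv_C]
    ring
  have hGdeg : G.totalDegree ≤ max p.totalDegree q.totalDegree := by
    have key : ∀ a b : MvPolynomial σ K,
        (C a * map C b : MvPolynomial σ (MvPolynomial σ K)).totalDegree ≤ b.totalDegree := by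
      intro a b
      refine (totalDegree_mul _ _).trans ?_
      rw [totalDegree_C, zero_add]
      exact Finset.sup_mono (support_map_subset _ _)
    exact (totalDegree_sub _ _).trans (max_le_max (key _ _) (key _ _))
  have hdegτ : (τ R₂).totalDegree + (τ S₂).totalDegree = G.totalDegree := by
    rw [← totalDegree_mul_of_isDomain (hτ0 hR0) (hτ0 hS0), ← map_mul, hG, hτG, totalDegree_neg]
  have hdeg : R₂.totalDegree + S₂.totalDegree = G.totalDegree := by
    rw [← totalDegree_mul_of_isDomain hR0 hS0, hG]
  have hqdvd : q ∣ coeff s R₂ := hpq.symm.dvd_of_dvd_mul_left ⟨_, hst.symm⟩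
  have hpdvd : p ∣ coeff t R₂ := hpq.dvd_of_dvd_mul_left ⟨_, hst⟩
  have hdvddeg : ∀ {a b : MvPolynomial σ K}, b ≠ 0 → a ∣ b → a.totalDegree ≤ b.totalDegree := by
    rintro a b hb ⟨w, rfl⟩
    rw [totalDegree_mul_of_isDomain (left_ne_zero_of_mul hb) (right_ne_zero_of_mul hb)]
    omega
  have h1 := (hdvddeg hs hqdvd).trans (totalDegree_coeff_le s R₂)
  have h2 := (hdvddeg ht hpdvd).trans (totalDegree_coeff_le t R₂)
  rw [← hτ] at h1 h2
  -- the cofactor `S₂` involves only the variables `x`, and its content divides both `p` and `q`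
  have hS : (τ S₂).totalDegree = 0 := by
    have := max_le h2 h1
    omega
  obtain ⟨w, hw⟩ : ∃ w, τ S₂ = C w := ⟨_, totalDegree_eq_zero_iff_eq_C.1 hS⟩
  have hSw : S₂ = map C w := τ.injective (by rw [hw, hτC])
  have hwG : ∀ l, w ∣ coeff l G := by
    have : C w ∣ G := by
      rw [← neg_neg G, ← hτG, ← hG, map_mul, hw]
      exact (Dvd.intro_left _ rfl).neg_right
    exact (C_dvd_iff_dvd_coeff _ _).1 this
  have hunit : IsUnit (C (coeff i p * coeff j q - coeff j p * coeff i q) : MvPolynomial σ K) :=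
    (isUnit_iff_ne_zero.2 hi).map C
  have hw1 : IsUnit w := by
    refine hpq ?_ ?_
    · rw [← hunit.dvd_mul_right (b := p), hG2]
      exact dvd_sub ((hwG i).mul_left _) ((hwG j).mul_left _)
    · rw [← hunit.dvd_mul_right (b := q), hG1]
      exact dvd_sub ((hwG i).mul_left _) ((hwG j).mul_left _)
  have hw0 : w.totalDegree = 0 := by
    exact (isUnit_iff_totalDegree_of_isReduced.1 hw1).2
  have hS2 : S₂.totalDegree ≤ 0 := by
    rw [hSw, ← hw0]
    exact Finset.sup_mono (support_map_subset _ _)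
  omega

end Factor

/-! ### Dependencies over the field of constants -/

section Constants

variable {K E F : Type*} [Field K] [Field E] [Field F]
  [Algebra (MvPolynomial (Fin 2) K) F] [Algebra E F] {κ : K →+* E} {A B : MvPolynomial (Fin 2) K}

/-- Substitution of the coordinate functions `x, y ∈ F` for the variables of `E[X,Y]`, where
`F ⊇ K[x,y]` and `E` is a field of coefficients in `F`. -/
def ev : MvPolynomial (Fin 2) E →ₐ[E] F :=
  aeval ![algebraMap (MvPolynomial (Fin 2) K) F (X 0), algebraMap (MvPolynomial (Fin 2) K) F (X 1)]

lemma ev_X (i : Fin 2) : ev (K := K) (X i : MvPolynomial (Fin 2) E)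
    = algebraMap (MvPolynomial (Fin 2) K) F (X i) := by
  fin_cases i <;> simp [ev]

lemma ev_map (hκ : ∀ a, algebraMap E F (κ a) = algebraMap (MvPolynomial (Fin 2) K) F (C a))
    (p : MvPolynomial (Fin 2) K) : ev (K := K) (map κ p) = algebraMap _ F p := by
  induction p using MvPolynomial.induction_on with
  | C a => rw [map_C, ← hκ, ev, aeval_C]
  | add p q hp hq => simp [hp, hq]
  | mul_X p i hp => rw [map_mul, map_mul, map_X, ev_X, hp, map_mul]

variable (δ : Derivation E F F)

/-- The derivation `dD`, extended `E`-linearly to `E[X,Y]`, is intertwined by `ev` with `δ`. -/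
lemma derivation_ev (hκ : ∀ a, algebraMap E F (κ a) = algebraMap (MvPolynomial (Fin 2) K) F (C a))
    (hδ : ∀ a : MvPolynomial (Fin 2) K, δ (algebraMap _ F a) = algebraMap _ F (dD A B a))
    (P : MvPolynomial (Fin 2) E) :
    δ (ev (K := K) P) = ev (K := K) (dD (map κ A) (map κ B) P) := by
  induction P using MvPolynomial.induction_on with
  | C a => simp [ev, Derivation.map_algebraMap, ← algebraMap_eq]
  | add p q hp hq => simp [hp, hq]
  | mul_X p i hp =>
    have hX : δ (ev (K := K) (X i : MvPolynomial (Fin 2) E))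
        = ev (K := K) (dD (map κ A) (map κ B) (X i)) := by
      rw [ev_X, hδ, ← map_X κ i, dD_map, ev_map hκ]
    rw [map_mul, Derivation.leibniz, Derivation.leibniz, hp, hX]
    simp

/-- If `x, y` are algebraically dependent over the constants of `δ`, with a dependency of degree
at most `M`, then `D₀` has a rational first integral of degree at most `M`: some ratio of
coefficients of an irreducible dependency is a nonconstant first integral `p / q`, and the
symmetry of `q(x) p(X) - p(x) q(X)` bounds its degree. -/
lemma hasRatFI_of_dependency [CharZero K] [IsFractionRing (MvPolynomial (Fin 2) K) F]
    (hκ : ∀ a, algebraMap E F (κ a) = algebraMap (MvPolynomial (Fin 2) K) F (C a))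
    (hδ : ∀ a : MvPolynomial (Fin 2) K, δ (algebraMap _ F a) = algebraMap _ F (dD A B a))
    (hA : A ≠ 0) (hB : B ≠ 0) {T : MvPolynomial (Fin 2) E} (hT0 : T ≠ 0)
    (hT : ev (K := K) (F := F) T = 0) {M : ℕ} (hM : T.totalDegree ≤ M) : HasRatFI A B M := by
  have hinj : Function.Injective (algebraMap (MvPolynomial (Fin 2) K) F) :=
    IsFractionRing.injective _ _
  have hEF : Function.Injective (algebraMap E F) := (algebraMap E F).injective
  have : CharZero E := charZero_of_injective_ringHom κ.injective
  have hytr : Transcendental E (algebraMap (MvPolynomial (Fin 2) K) F (X 1)) := by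
    apply transcendental_of_derivation δ
    rw [hδ, Ne, map_eq_zero_iff _ hinj, dD_apply]
    simp [derD0, pderiv_X, hA, hB]
  -- an irreducible dependency
  obtain ⟨R, hR, hRe, W, rfl⟩ : ∃ R, Prime R ∧ ev (K := K) (F := F) R = 0 ∧ R ∣ T := by
    clear hM
    induction T using UniqueFactorizationMonoid.induction_on_prime with
    | h₁ => exact absurd rfl hT0
    | h₂ u hu => exact absurd hT (hu.map (ev (K := K) (F := F))).ne_zero
    | h₃ a p ha hp ih =>
      rw [map_mul, mul_eq_zero] at hT
      rcases hT with h | h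
      · exact ⟨p, hp, h, Dvd.intro _ rfl⟩
      · obtain ⟨R, h1, h2, h3⟩ := ih ha h
        exact ⟨R, h1, h2, h3.mul_left _⟩
  have hRM : R.totalDegree ≤ M := by
    rw [totalDegree_mul_of_isDomain hR.ne_zero (right_ne_zero_of_mul hT0)] at hM
    omega
  obtain ⟨s, hs⟩ := ne_zero_iff.1 hR.ne_zero
  -- some ratio of coefficients is not in `K`, since `x, y` are independent over `K`
  obtain ⟨t, ht⟩ : ∃ t, coeff t R / coeff s R ∉ Set.range κ := by
    by_contra! hall
    have hmem : C (coeff s R)⁻¹ * R ∈ Set.range (map κ) := by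
      rw [mem_range_map_iff_coeffs_subset]
      intro z hz
      obtain ⟨n, -, rfl⟩ := mem_coeffs_iff.1 hz
      rw [coeff_C_mul, mul_comm, ← div_eq_mul_inv]
      exact hall n
    obtain ⟨r, hr⟩ := hmem
    have h0 : algebraMap _ F r = 0 := by rw [← ev_map hκ, hr, map_mul, hRe, mul_zero]
    rw [map_eq_zero_iff _ hinj] at h0
    rw [h0, map_zero, eq_comm, mul_eq_zero] at hr
    exact hr.elim (C_ne_zero.2 (inv_ne_zero hs)) hR.ne_zero
  set c := coeff t R / coeff s R with hc
  have hcs : coeff t R = c * coeff s R := by rw [hc, div_mul_cancel₀ _ hs]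
  obtain ⟨p, ⟨q, hq'⟩, hpq, hmk⟩ :=
    IsFractionRing.exists_reduced_fraction (MvPolynomial (Fin 2) K) (algebraMap E F c)
  have hq : q ≠ 0 := nonZeroDivisors.ne_zero hq'
  have hcq : algebraMap E F c * algebraMap _ F q = algebraMap _ F p := by
    rw [← hmk]; exact IsLocalization.mk'_spec F p ⟨q, hq'⟩
  change IsRelPrime p q at hpq
  have hne : ∀ a : K, p ≠ C a * q := by
    intro a hpa
    apply ht
    refine ⟨a, hEF ?_⟩
    rw [hpa, map_mul, ← hκ] at hcq
    exact (mul_right_cancel₀ ((map_ne_zero_iff _ hinj).2 hq) hcq).symm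
  have hfirst : q * derD0 A B p = p * derD0 A B q := by
    apply mul_left_cancel₀ hA
    have h1 := congr_arg δ hcq
    rw [Derivation.leibniz, δ.map_algebraMap, hδ, hδ, smul_zero, add_zero, smul_eq_mul] at h1
    have h2 : q * dD A B p = p * dD A B q := by
      apply hinj
      rw [map_mul, map_mul, ← h1, ← hcq]
      ring
    rw [dD_apply, dD_apply] at h2
    linear_combination h2
  -- `R` divides `p(X) - c q(X)`; clear denominators in this divisibility
  obtain ⟨S, hS⟩ : R ∣ map κ p - C c * map κ q := by
    refine prime_dvd_of_aeval_eq_zero hytr hR hRe _ ?_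
    change ev (K := K) (F := F) _ = 0
    rw [map_sub, map_mul, ev_map hκ, ev_map hκ, ← hcq, ev, aeval_C, sub_self]
  obtain ⟨b₁, hb₁, R₁, hR₁⟩ := exists_clear_denominators (R := MvPolynomial (Fin 2) K)
    (map (algebraMap E F) R)
  obtain ⟨b₂, hb₂, S₁, hS₁⟩ := exists_clear_denominators (R := MvPolynomial (Fin 2) K)
    (map (algebraMap E F) S)
  have hmapinj := map_injective (σ := Fin 2) (algebraMap (MvPolynomial (Fin 2) K) F) hinj
  have hcomp : (algebraMap E F).comp κ = (algebraMap (MvPolynomial (Fin 2) K) F).comp C :=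
    RingHom.ext hκ
  have hfac : R₁ * (C q * S₁) = C (b₁ * b₂) * (C q * map C p - C p * map C q) := by
    apply hmapinj
    have h1 := congr_arg (map (algebraMap E F)) hS
    simp only [map_sub, map_mul, map_map, map_C, hcomp] at h1
    simp only [map_sub, map_mul, map_map, map_C, hR₁, hS₁, ← hcq]
    linear_combination (-1 : MvPolynomial (Fin 2) F) * C (algebraMap _ F b₁)
      * C (algebraMap _ F b₂) * C (algebraMap _ F q) * h1
  obtain ⟨f₁, f₂, R₂, S₂, hR₂, -, hG⟩ := exists_strip_C _ (mul_ne_zero hb₁ hb₂) _ _ _ hfac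
  have hcoef : ∀ n, algebraMap _ F (coeff n R₁)
      = algebraMap _ F b₁ * algebraMap E F (coeff n R) := by
    intro n
    rw [← coeff_map, hR₁, coeff_C_mul, coeff_map]
  have hs₁ : coeff s R₁ ≠ 0 := by
    rw [← map_ne_zero_iff _ hinj, hcoef]
    exact mul_ne_zero ((map_ne_zero_iff _ hinj).2 hb₁) ((map_ne_zero_iff _ hEF).2 hs)
  rw [hR₂, coeff_C_mul] at hs₁
  have hf₁ := left_ne_zero_of_mul hs₁
  have hst : q * coeff t R₂ = p * coeff s R₂ := by
    apply mul_left_cancel₀ hf₁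
    have h1 : q * coeff t R₁ = p * coeff s R₁ := by
      apply hinj
      rw [map_mul, map_mul, hcoef, hcoef, hcs, map_mul, ← hcq]
      ring
    rw [hR₂, coeff_C_mul, coeff_C_mul] at h1
    linear_combination h1
  have hdeg : R₂.totalDegree ≤ M := by
    have hR₂0 : R₂ ≠ 0 := fun h => hs₁ (by rw [h, coeff_zero, mul_zero])
    have h1 : R₁.totalDegree = R₂.totalDegree := by
      rw [hR₂, totalDegree_mul_of_isDomain (C_ne_zero.2 hf₁) hR₂0, totalDegree_C, zero_add]
    rw [← h1]
    refine le_trans (Finset.sup_mono fun n hn => ?_) hRM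
    rw [mem_support_iff] at hn ⊢
    intro h0
    apply hn
    rw [← map_eq_zero_iff _ hinj, hcoef, h0, map_zero, mul_zero]
  obtain ⟨h1, h2⟩ := degree_le_of_factor hq hpq hne hG hst (right_ne_zero_of_mul hs₁)
  exact ⟨p, q, hq, h1.trans hdeg, h2.trans hdeg, hfirst, hne⟩

lemma defect_C_mul {L : Type*} [CommRing L] (A B : MvPolynomial (Fin 2) L) (k : ℕ)
    (P Q : MvPolynomial (Fin 2) L) (a b : L) :
    defect A B k (C a * P) (C b * Q) = C (a * b) * defect A B k P Q := by
  have h : ∀ (c : L) W, dD A B (C c * W) = C c * dD A B W := fun c W => by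
    rw [← smul_eq_C_mul, Derivation.map_smul, smul_eq_C_mul]
  simp only [defect, h, C_mul]
  ring

/-- A Darbouxian first integral with coefficients in the constants `E` specialises, after
clearing denominators and evaluating at a general point of `K²`, to one over `K`. -/
lemma hasDarbFI_of_defect_eq_zero [CharZero K] [IsFractionRing (MvPolynomial (Fin 2) K) F]
    (hκ : ∀ a, algebraMap E F (κ a) = algebraMap (MvPolynomial (Fin 2) K) F (C a))
    {k N : ℕ} {P Q : MvPolynomial (Fin 2) E} (hP : P ≠ 0) (hQ : Q ≠ 0)
    (hPN : P.totalDegree ≤ N) (hQN : Q.totalDegree ≤ N)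
    (h : defect (map κ A) (map κ B) k P Q = 0) : HasDarbFI A B k N := by
  have hinj : Function.Injective (algebraMap (MvPolynomial (Fin 2) K) F) :=
    IsFractionRing.injective _ _
  have hmapinj := map_injective (σ := Fin 2) (algebraMap (MvPolynomial (Fin 2) K) F) hinj
  have hEinj := map_injective (σ := Fin 2) (algebraMap E F) (algebraMap E F).injective
  have hcomp : (algebraMap E F).comp κ = (algebraMap (MvPolynomial (Fin 2) K) F).comp C :=
    RingHom.ext hκ
  have clear : ∀ {P : MvPolynomial (Fin 2) E}, P ≠ 0 → P.totalDegree ≤ N →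
      ∃ b : MvPolynomial (Fin 2) K, ∃ P₁ : MvPolynomial (Fin 2) (MvPolynomial (Fin 2) K),
        P₁ ≠ 0 ∧ P₁.totalDegree ≤ N ∧
        map (algebraMap _ F) P₁ = C (algebraMap _ F b) * map (algebraMap E F) P := by
    intro P hP hPN
    obtain ⟨b, hb, P₁, hP₁⟩ := exists_clear_denominators (R := MvPolynomial (Fin 2) K)
      (map (algebraMap E F) P)
    refine ⟨b, P₁, ?_, ?_, hP₁⟩
    · rintro rfl
      rw [map_zero, eq_comm, mul_eq_zero, C_eq_zero, map_eq_zero_iff _ hinj,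
        map_eq_zero_iff _ hEinj] at hP₁
      exact hP₁.elim hb hP
    · refine le_trans (Finset.sup_mono fun n hn => ?_) hPN
      rw [mem_support_iff] at hn ⊢
      intro h0
      apply hn
      rw [← map_eq_zero_iff _ hinj, ← coeff_map, hP₁, coeff_C_mul, coeff_map, h0, map_zero,
        mul_zero]
  obtain ⟨b, P₁, hP₁0, hP₁N, hP₁⟩ := clear hP hPN
  obtain ⟨b', Q₁, hQ₁0, hQ₁N, hQ₁⟩ := clear hQ hQN
  have h₁ : defect (map C A) (map C B) k P₁ Q₁ = 0 := by
    apply hmapinj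
    rw [← defect_map, hP₁, hQ₁, defect_C_mul, map_map, map_map, ← hcomp, ← map_map, ← map_map,
      defect_map, h]
    simp
  obtain ⟨s, hs⟩ := ne_zero_iff.1 hP₁0
  obtain ⟨t, ht⟩ := ne_zero_iff.1 hQ₁0
  obtain ⟨z, hz⟩ : ∃ z : Fin 2 → K, eval z (coeff s P₁ * coeff t Q₁) ≠ 0 := by
    by_contra! hz
    exact mul_ne_zero hs ht (MvPolynomial.funext fun z => by rw [hz, map_zero])
  rw [map_mul] at hz
  have hne : ∀ {W : MvPolynomial (Fin 2) (MvPolynomial (Fin 2) K)} {n}, eval z (coeff n W) ≠ 0 →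
      map (eval z) W ≠ 0 := fun hW h0 => hW (by rw [← coeff_map, h0, coeff_zero])
  have hC : ∀ W : MvPolynomial (Fin 2) K, map (eval z) (map C W) = W := by
    intro W
    have : (eval z).comp C = RingHom.id K := RingHom.ext fun a => by simp
    rw [map_map, this, map_id]
  refine ⟨map (eval z) Q₁, map (eval z) P₁, hne (left_ne_zero_of_mul hz),
    hne (right_ne_zero_of_mul hz), (totalDegree_map_le' _ _).trans hQ₁N,
    (totalDegree_map_le' _ _).trans hP₁N, ?_⟩
  have h₂ := congr_arg (map (eval z)) h₁
  rw [← defect_map, hC, hC, map_zero, defect, dD_apply, dD_apply] at h₂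
  linear_combination (-1 : MvPolynomial (Fin 2) K) * h₂

/-- A block of coefficients `w_j` whose ratios are constants of `δ` is, up to the factor `w_{j₀}`,
the coefficient vector of a polynomial over `E`. -/
lemma exists_polyOf_of_const
    (hlift : ∀ f : F, δ f = 0 → ∃ e : E, algebraMap E F e = f)
    {N : ℕ} (w : MonIdx N → F) (j₀ : MonIdx N) (hj₀ : w j₀ ≠ 0)
    (h : ∀ j, δ (w j / w j₀) = 0) :
    ∃ P : MvPolynomial (Fin 2) E, P ≠ 0 ∧ P.totalDegree ≤ N ∧
      w j₀ * ev (K := K) P = ∑ j, w j * algebraMap (MvPolynomial (Fin 2) K) F (mon j) := by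
  choose a ha using fun j => hlift _ (h j)
  refine ⟨polyOf a, polyOf_ne_zero (i := j₀) ?_, totalDegree_polyOf_le a, ?_⟩
  · intro h0
    have := ha j₀
    rw [h0, map_zero, div_self hj₀] at this
    exact zero_ne_one this
  · rw [polyOf, map_sum, Finset.mul_sum]
    refine Finset.sum_congr rfl fun j _ => ?_
    have hm : ev (K := K) (mon j : MvPolynomial (Fin 2) E)
        = algebraMap (MvPolynomial (Fin 2) K) F (mon j) := by
      simp [mon, ev_X]
    have hC : ev (K := K) (C (a j)) = w j / w j₀ := by rw [ev, aeval_C, ha]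
    rw [map_mul, hm, hC, ← mul_assoc, mul_div_cancel₀ _ hj₀]

/-- The direct implication over `K`, with `E` the field of constants of `δ`. -/
lemma hasDarbFI_or_hasRatFI [CharZero K] [IsFractionRing (MvPolynomial (Fin 2) K) F]
    (hκ : ∀ a, algebraMap E F (κ a) = algebraMap (MvPolynomial (Fin 2) K) F (C a))
    (hδ : ∀ a : MvPolynomial (Fin 2) K, δ (algebraMap _ F a) = algebraMap _ F (dD A B a))
    (hlift : ∀ f : F, δ f = 0 → ∃ e : E, algebraMap E F e = f)
    (hA : A ≠ 0) (hB : B ≠ 0) {d N k : ℕ} (hd : 1 ≤ d) (hN : 1 ≤ N)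
    (hAd : A.totalDegree ≤ d) (hBd : B.totalDegree ≤ d) (h : extactic1 A B N k = 0) :
    HasDarbFI A B k N ∨ HasRatFI A B (2 * N + 2 * d - 1) := by
  set ι := algebraMap (MvPolynomial (Fin 2) K) F with hι
  have hNM : N ≤ 2 * N + 2 * d - 1 := by omega
  obtain ⟨c, hc0, hrel, hc⟩ := exists_minimal_relation
    (Fintype.equivFin (MonIdx N ⊕ MonIdx N)).symm (δ.restrictScalars ℤ)
    (fun s => ι (wt A B k s)) (fun s => ι (bs s)) (by
      have h1 := congr_arg ι h
      rw [extactic1_eq, RingHom.map_det, map_zero] at h1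
      rw [← h1]
      congr 1
      ext i j
      simp only [Matrix.of_apply, RingHom.mapMatrix_apply, Matrix.map_apply]
      generalize (Fintype.equivFin (MonIdx N ⊕ MonIdx N)).symm j = s
      refine (Function.Semiconj.iterate_right (f := ι) (fun f => ?_) i (bs s)).symm
      simp [hδ])
  rw [Fintype.sum_sum_type] at hrel
  have hl : ∀ j₀, c (.inl j₀) ≠ 0 → ∀ j, δ (c (.inl j) / c (.inl j₀)) = 0 := fun j₀ h0 j =>
    (hc _ h0 _).trans (by simp [wt])
  have hr : ∀ j₀, c (.inr j₀) ≠ 0 → ∀ j, δ (c (.inr j) / c (.inr j₀)) = 0 := fun j₀ h0 j =>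
    (hc _ h0 _).trans (by simp [wt])
  by_cases h0l : ∃ j₀, c (.inl j₀) ≠ 0
  · obtain ⟨j₀, hj₀⟩ := h0l
    obtain ⟨P, hP0, hPN, hP⟩ := exists_polyOf_of_const (K := K) δ hlift (fun j => c (.inl j)) j₀ hj₀
      (hl j₀ hj₀)
    by_cases h0r : ∃ j₁, c (.inr j₁) ≠ 0
    · obtain ⟨j₁, hj₁⟩ := h0r
      obtain ⟨Q, hQ0, hQN, hQ⟩ := exists_polyOf_of_const (K := K) δ hlift (fun j => c (.inr j)) j₁
        hj₁ (hr j₁ hj₁)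
      set g := c (.inr j₁) / c (.inl j₀) with hg
      have hδg : δ g = k * ι (wPol A B 1) * g :=
        (hc _ hj₀ _).trans (by simp [wt, hg])
      have hPQ : ev (K := K) P = -(g * ev (K := K) Q) := by
        apply mul_left_cancel₀ hj₀
        have h1 : c (.inl j₀) * g = c (.inr j₁) := mul_div_cancel₀ _ hj₀
        have h2 : c (.inl j₀) * ev (K := K) P + c (.inr j₁) * ev (K := K) Q = 0 := by
          rw [hP, hQ]; exact hrel
        linear_combination h2 + ev (K := K) Q * h1
      by_cases hdef : defect (map κ A) (map κ B) k P Q = 0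
      · exact Or.inl (hasDarbFI_of_defect_eq_zero hκ hP0 hQ0 hPN hQN hdef)
      · refine Or.inr (hasRatFI_of_dependency δ hκ hδ hA hB hdef ?_ (totalDegree_defect_le hd hN
          ((totalDegree_map_le' _ _).trans hAd) ((totalDegree_map_le' _ _).trans hBd) hPN hQN))
        have h1 := derivation_ev δ hκ hδ P
        have h2 := derivation_ev δ hκ hδ Q
        rw [hPQ, map_neg, Derivation.leibniz, smul_eq_mul, smul_eq_mul, hδg] at h1
        rw [defect, map_sub, map_sub, map_mul, map_mul, map_mul, map_mul, map_mul, ← h1, ← h2,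
          wPol_one_map, ev_map hκ, hPQ, map_natCast]
        ring
    · push Not at h0r
      refine Or.inr ((hasRatFI_of_dependency δ hκ hδ hA hB hP0 ?_ hPN).mono hNM)
      apply (mul_eq_zero.1 (hP.trans ?_)).resolve_left hj₀
      simpa [h0r, bs] using hrel
  · push Not at h0l
    obtain ⟨j₁, hj₁⟩ : ∃ j₁, c (.inr j₁) ≠ 0 := by
      by_contra! h0r
      apply hc0
      ext (j | j)
      · exact h0l j
      · exact h0r j
    obtain ⟨Q, hQ0, hQN, hQ⟩ := exists_polyOf_of_const (K := K) δ hlift (fun j => c (.inr j)) j₁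
      hj₁ (hr j₁ hj₁)
    refine Or.inr ((hasRatFI_of_dependency δ hκ hδ hA hB hQ0 ?_ hQN).mono hNM)
    apply (mul_eq_zero.1 (hQ.trans ?_)).resolve_left hj₁
    simpa [h0l, bs] using hrel

/-- The field of constants of a derivation of a field. -/
def constants {K F : Type*} [Field K] [Field F] [Algebra K F] (δ : Derivation K F F) :
    Subfield F where
  carrier := {f | δ f = 0}
  mul_mem' := by
    intro a b (ha : δ a = 0) (hb : δ b = 0)
    simp [Derivation.leibniz, ha, hb]
  one_mem' := by simp
  add_mem' := by
    intro a b (ha : δ a = 0) (hb : δ b = 0)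
    simp [ha, hb]
  zero_mem' := by simp
  neg_mem' := by
    intro a (ha : δ a = 0)
    simp [ha]
  inv_mem' := by
    intro a (ha : δ a = 0)
    simp [Derivation.leibniz_inv, ha]

/-- The direct implication over `K`. -/
lemma hasDarbFI_or_hasRatFI_of_extactic1_eq_zero {K : Type*} [Field K] [CharZero K]
    {A B : MvPolynomial (Fin 2) K} (hA : A ≠ 0) (hB : B ≠ 0) {d N k : ℕ} (hd : 1 ≤ d)
    (hN : 1 ≤ N) (hAd : A.totalDegree ≤ d) (hBd : B.totalDegree ≤ d)
    (h : extactic1 A B N k = 0) :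
    HasDarbFI A B k N ∨ HasRatFI A B (2 * N + 2 * d - 1) := by
  obtain ⟨δ, hδ⟩ := exists_derivation_fractionRing (F := FractionRing (MvPolynomial (Fin 2) K))
    (dD A B)
  let E := constants δ
  let δ' : Derivation E (FractionRing (MvPolynomial (Fin 2) K))
      (FractionRing (MvPolynomial (Fin 2) K)) :=
    Derivation.mk'
      { toFun := δ
        map_add' := map_add δ
        map_smul' := by
          rintro ⟨e, he : δ e = 0⟩ f
          change δ (e * f) = e * δ f
          simp [Derivation.leibniz, he] }
      δ.leibniz
  let κ : K →+* E := (algebraMap K (FractionRing (MvPolynomial (Fin 2) K))).codRestrict E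
    δ.map_algebraMap
  exact hasDarbFI_or_hasRatFI (E := E) (κ := κ) δ'
    (fun a => IsScalarTower.algebraMap_apply K (MvPolynomial (Fin 2) K) _ a)
    hδ (fun f hf => ⟨⟨f, hf⟩, rfl⟩) hA hB hd hN hAd hBd h

end Constants

/-- **The Darbouxian extactic curve theorem** (Theorem `thm:exta+dfi` of Chèze–Combot). -/
theorem darbouxian_extactic_curve {K : Type*} [Field K] [CharZero K]
    (A B : MvPolynomial (Fin 2) K) (hA : A ≠ 0) (hB : B ≠ 0)
    (hcop : ∀ p : MvPolynomial (Fin 2) K, p ∣ A → p ∣ B → IsUnit p)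
    (d : ℕ) (hd : d = max A.totalDegree B.totalDegree) (hd1 : 1 ≤ d)
    (N k : ℕ) (hN : 1 ≤ N) (hk : 1 ≤ k) :
    (extactic1 A B N k = 0 →
      ((HasDarbFI (mapAC A) (mapAC B) k N ∨
          HasRatFI (mapAC A) (mapAC B) (2 * N + 2 * d - 1)) ∧
        (HasDarbFI A B k N ∨ HasRatFI A B (2 * N + 2 * d - 1)))) ∧
    ((HasRatFI (mapAC A) (mapAC B) N ∨ HasDarbFI (mapAC A) (mapAC B) k N) →
      extactic1 A B N k = 0) := by
  have hcase : extactic1 A B N k = 0 → HasDarbFI A B k N ∨ HasRatFI A B (2 * N + 2 * d - 1) :=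
    hasDarbFI_or_hasRatFI_of_extactic1_eq_zero hA hB hd1 hN (hd ▸ le_max_left _ _)
      (hd ▸ le_max_right _ _)
  refine ⟨fun h => ⟨(hcase h).imp (HasDarbFI.map _) (HasRatFI.map _), hcase h⟩, fun h => ?_⟩
  apply map_injective (σ := Fin 2) _ (algebraMap K (AlgebraicClosure K)).injective
  rw [map_zero, ← extactic1_map]
  exact h.elim (extactic1_eq_zero_of_ratFI _ _ _ _) (extactic1_eq_zero_of_darbFI _ _ _ _)

end
end ExtacticPaper
end

section
/- Let k ≥ 1 and N ≥ 1. Assume that D₀ has a k-Darbouxian first integral of some degree and has no rational first integral of any degree. Then D₀ has a k-Darbouxian first integral of degree ≤ N defined over K if and only if D₀ has a k-Darbouxian first integral of degree ≤ N. -/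
/-!
The quotient of two `k`-Darbouxian first integrals is a rational first integral, so in the absence
of nonconstant rational first integrals a `k`-Darbouxian first integral `G = p / q` over `K̄` is
unique up to a constant (`proportional_of_isDarb`). The equation has coefficients in `K`, so every
`σ ∈ Gal(K̄/K)` sends `G` to another solution, hence to a constant multiple of `G`. With `p`, `q`
coprime this forces `σ p` and `σ q` to be constant multiples of `p` and `q`
(`map_eq_C_mul_of_dvd`). Scaling `p` and `q` so that each has a coefficient equal to `1` makes
them Galois invariant, hence defined over `K` because `K̄/K` is Galois in characteristic zero
(`exists_descent`). Reducing the fraction and rescaling do not raise the degree.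
-/

/-!
# Descent to `K` for `k`-Darbouxian first integrals (Corollary `cor:darbouxdansK`)

Suppose `D₀ = A ∂x + B ∂y` has a `k`-Darbouxian first integral (of some degree) and no
rational first integral (of any degree).  Then `D₀` has a `k`-Darbouxian first integral of
degree ≤ N defined over `K` if and only if it has a `k`-Darbouxian first integral of
degree ≤ N (over the algebraic closure `K̄`).
-/

open MvPolynomial

namespace ExtacticPaper

noncomputable section

variable {L : Type*}

/-- The polynomial identity expressing `D₀(p/q) = −k·A·∂y(B/A)·(p/q)`, as in `HasDarbFI`. -/
def IsDarb [Field L] (A B : MvPolynomial (Fin 2) L) (k : ℕ) (p q : MvPolynomial (Fin 2) L) :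
    Prop :=
  A * (q * derD0 A B p - p * derD0 A B q)
    = -((k : MvPolynomial (Fin 2) L) * wPol A B 1 * p * q)

lemma derD0_mul [CommRing L] (A B p q : MvPolynomial (Fin 2) L) :
    derD0 A B (p * q) = derD0 A B p * q + p * derD0 A B q := by
  simp only [derD0, Derivation.leibniz, smul_eq_mul]
  ring

lemma derD0_C [CommRing L] (A B : MvPolynomial (Fin 2) L) (c : L) : derD0 A B (C c) = 0 := by
  simp [derD0]

lemma map_derD0 {M : Type*} [CommRing L] [CommRing M] (f : L →+* M)
    (A B p : MvPolynomial (Fin 2) L) :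
    map f (derD0 A B p) = derD0 (map f A) (map f B) (map f p) := by
  simp [derD0, pderiv_map]

lemma map_wPol_one {M : Type*} [CommRing L] [CommRing M] (f : L →+* M)
    (A B : MvPolynomial (Fin 2) L) :
    map f (wPol A B 1) = wPol (map f A) (map f B) 1 := by
  simp [wPol, pderiv_map]

lemma isDarb_map_iff {M : Type*} [Field L] [Field M] (f : L →+* M)
    (A B : MvPolynomial (Fin 2) L) (k : ℕ) (p q : MvPolynomial (Fin 2) L) :
    IsDarb (map f A) (map f B) k (map f p) (map f q) ↔ IsDarb A B k p q := by
  unfold IsDarb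
  rw [← (map_injective f f.injective).eq_iff (a := A * _)]
  simp only [map_mul, map_sub, map_neg, map_derD0, map_wPol_one, map_natCast]

lemma totalDegree_map_eq {M : Type*} [Field L] [Field M] (f : L →+* M)
    (p : MvPolynomial (Fin 2) L) : (map f p).totalDegree = p.totalDegree := by
  simp [totalDegree, support_map_of_injective p f.injective]

/-- The identity `IsDarb` depends only on the fraction `p / q`. -/
lemma IsDarb.cancel [Field L] {A B p q r : MvPolynomial (Fin 2) L} {k : ℕ} (hr : r ≠ 0)
    (h : IsDarb A B k (r * p) (r * q)) : IsDarb A B k p q := by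
  unfold IsDarb at h ⊢
  rw [derD0_mul, derD0_mul] at h
  apply mul_left_cancel₀ (pow_ne_zero 2 hr)
  linear_combination h

lemma IsDarb.C_mul_C_mul [Field L] {A B p q : MvPolynomial (Fin 2) L} {k : ℕ} (a b : L)
    (h : IsDarb A B k p q) : IsDarb A B k (C a * p) (C b * q) := by
  unfold IsDarb at h ⊢
  rw [derD0_mul, derD0_mul, derD0_C, derD0_C]
  linear_combination C a * C b * h

/-- The quotient of two `k`-Darbouxian first integrals is a rational first integral, hence constant
if there is no nonconstant one. -/
lemma proportional_of_isDarb [Field L] {A B p q p' q' : MvPolynomial (Fin 2) L} {k : ℕ}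
    (hA : A ≠ 0) (hnorat : ¬ ∃ M : ℕ, HasRatFI A B M) (hp : p ≠ 0) (hq' : q' ≠ 0)
    (h : IsDarb A B k p q) (h' : IsDarb A B k p' q') :
    ∃ c : L, p' * q = C c * (p * q') := by
  by_contra! hc
  refine hnorat ⟨max (p' * q).totalDegree (p * q').totalDegree, p' * q, p * q',
    mul_ne_zero hp hq', le_max_left _ _, le_max_right _ _, ?_, hc⟩
  unfold IsDarb at h h'
  apply mul_left_cancel₀ hA
  rw [derD0_mul, derD0_mul]
  linear_combination p * q * h' - p' * q' * h

/-- Base change along a field homomorphism preserves the degree, so a multiple of `p` among the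
conjugates of `p` is a constant multiple. -/
lemma map_eq_C_mul_of_dvd [Field L] {p : MvPolynomial (Fin 2) L} (f : L →+* L) (hp : p ≠ 0)
    (h : p ∣ map f p) : ∃ c : L, map f p = C c * p := by
  obtain ⟨r, hr⟩ := h
  have hr0 : r ≠ 0 := by
    rintro rfl
    rw [mul_zero, map_eq_zero_iff _ (map_injective f f.injective)] at hr
    exact hp hr
  have hdeg := congrArg totalDegree hr
  rw [totalDegree_map_eq, totalDegree_mul_of_isDomain hp hr0] at hdeg
  have hrC := totalDegree_eq_zero_iff_eq_C.mp (show r.totalDegree = 0 by omega)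
  exact ⟨coeff 0 r, by rw [hr, mul_comm, ← hrC]⟩

/-- A polynomial over a Galois extension which every automorphism multiplies by a constant becomes
defined over the base field after scaling. -/
lemma exists_descent {K E : Type*} [Field K] [Field E] [Algebra K E] [IsGalois K E]
    {p : MvPolynomial (Fin 2) E} (hp : p ≠ 0)
    (h : ∀ σ : Gal(E/K), ∃ c : E, map (σ : E →+* E) p = C c * p) :
    ∃ (p₀ : MvPolynomial (Fin 2) K) (a : E), a ≠ 0 ∧ map (algebraMap K E) p₀ = C a * p := by
  obtain ⟨m, hm⟩ := ne_zero_iff.mp hp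
  suffices C (coeff m p)⁻¹ * p ∈ Set.range (map (algebraMap K E)) by
    obtain ⟨p₀, hp₀⟩ := this
    exact ⟨p₀, _, inv_ne_zero hm, hp₀⟩
  rw [mem_range_map_iff_coeffs_subset]
  intro x hx
  obtain ⟨n, -, rfl⟩ := mem_coeffs_iff.mp hx
  rw [InfiniteGalois.mem_range_algebraMap_iff_fixed]
  intro σ
  obtain ⟨c, hc⟩ := h σ
  have key (i) : σ (coeff i p) = c * coeff i p := by
    simpa [coeff_map, coeff_C_mul] using congrArg (coeff i) hc
  have hcm : c * coeff m p ≠ 0 := by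
    rw [← key]
    simpa using hm
  have hc0 : c ≠ 0 := left_ne_zero_of_mul hcm
  rw [coeff_C_mul, map_mul, map_inv₀, key, key]
  field_simp

/-- Every fraction solving the `k`-Darbouxian equation can be put in lowest terms. -/
lemma exists_coprime_isDarb [Field L] {A B : MvPolynomial (Fin 2) L} {k N : ℕ}
    (h : HasDarbFI A B k N) :
    ∃ p q : MvPolynomial (Fin 2) L, q ≠ 0 ∧ p ≠ 0 ∧ p.totalDegree ≤ N ∧ q.totalDegree ≤ N ∧
      IsRelPrime p q ∧ IsDarb A B k p q := by
  obtain ⟨p, q, hq, hp, hpN, hqN, hD⟩ := h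
  obtain ⟨p', q', r, hrel, rfl, rfl⟩ := UniqueFactorizationMonoid.exists_reduced_factors p hp q
  exact ⟨p', q', right_ne_zero_of_mul hq, right_ne_zero_of_mul hp,
    (totalDegree_le_of_dvd_of_isDomain (Dvd.intro_left r rfl) hp).trans hpN,
    (totalDegree_le_of_dvd_of_isDomain (Dvd.intro_left r rfl) hq).trans hqN, hrel,
    IsDarb.cancel (left_ne_zero_of_mul hp) hD⟩

/-- **Corollary `cor:darbouxdansK`** of Chèze–Combot. -/
theorem darbouxian_defined_over_K {K : Type*} [Field K] [CharZero K]
    (A B : MvPolynomial (Fin 2) K) (hA : A ≠ 0) (hB : B ≠ 0)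
    (hcop : ∀ p : MvPolynomial (Fin 2) K, p ∣ A → p ∣ B → IsUnit p)
    (d : ℕ) (hd : d = max A.totalDegree B.totalDegree) (hd1 : 1 ≤ d)
    (k N : ℕ) (hk : 1 ≤ k) (hN : 1 ≤ N)
    (hdarb : ∃ M : ℕ, HasDarbFI (mapAC A) (mapAC B) k M)
    (hnorat : ¬ ∃ M : ℕ, HasRatFI (mapAC A) (mapAC B) M) :
    HasDarbFI A B k N ↔ HasDarbFI (mapAC A) (mapAC B) k N := by
  have hinj := map_injective (σ := Fin 2) _ (algebraMap K (AlgebraicClosure K)).injective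
  constructor
  · rintro ⟨p, q, hq, hp, hpN, hqN, hD⟩
    refine ⟨mapAC p, mapAC q, (map_ne_zero_iff _ hinj).mpr hq, (map_ne_zero_iff _ hinj).mpr hp,
      (totalDegree_map_eq _ p).trans_le hpN, (totalDegree_map_eq _ q).trans_le hqN,
      (isDarb_map_iff _ A B k p q).mpr hD⟩
  · intro h
    obtain ⟨p, q, hq, hp, hpN, hqN, hrel, hD⟩ := exists_coprime_isDarb h
    have hA' : mapAC A ≠ 0 := (map_ne_zero_iff _ hinj).mpr hA
    have hσ (σ : Gal(AlgebraicClosure K/K)) :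
        (∃ c, map (σ : AlgebraicClosure K →+* AlgebraicClosure K) p = C c * p) ∧
        (∃ c, map (σ : AlgebraicClosure K →+* AlgebraicClosure K) q = C c * q) := by
      set f : AlgebraicClosure K →+* AlgebraicClosure K := ↑σ with hf
      have hfix (P : MvPolynomial (Fin 2) K) : map f (mapAC P) = mapAC P := by
        have hcomp : f.comp (algebraMap K (AlgebraicClosure K)) =
            algebraMap K (AlgebraicClosure K) := by
          ext x
          simp [hf]
        rw [mapAC, map_map, hcomp]
      have hfinj := map_injective (σ := Fin 2) f f.injective
      have hfp : map f p ≠ 0 := (map_ne_zero_iff _ hfinj).mpr hp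
      have hfq : map f q ≠ 0 := (map_ne_zero_iff _ hfinj).mpr hq
      have hD' := (isDarb_map_iff f _ _ k p q).mpr hD
      rw [hfix, hfix] at hD'
      obtain ⟨c, hc⟩ := proportional_of_isDarb hA' hnorat hp hfq hD hD'
      have hc0 : c ≠ 0 := by
        rintro rfl
        exact mul_ne_zero hfp hq (by simpa using hc)
      constructor
      · exact map_eq_C_mul_of_dvd f hp (hrel.dvd_of_dvd_mul_right
          ⟨C c * map f q, by rw [hc]; ring⟩)
      · refine map_eq_C_mul_of_dvd f hq (hrel.symm.dvd_of_dvd_mul_left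
          ⟨C c⁻¹ * map f p, ?_⟩)
        have h1 : (C c⁻¹ * C c : MvPolynomial (Fin 2) (AlgebraicClosure K)) = 1 := by
          rw [← C_mul, inv_mul_cancel₀ hc0, C_1]
        linear_combination (-(p * map f q)) * h1 - C c⁻¹ * hc
    obtain ⟨p₀, a, ha, hp₀⟩ := exists_descent hp fun σ ↦ (hσ σ).1
    obtain ⟨q₀, b, hb, hq₀⟩ := exists_descent hq fun σ ↦ (hσ σ).2
    refine ⟨p₀, q₀, ?_, ?_, ?_, ?_, ?_⟩
    · rw [← map_ne_zero_iff _ hinj, hq₀]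
      exact mul_ne_zero (C_ne_zero.mpr hb) hq
    · rw [← map_ne_zero_iff _ hinj, hp₀]
      exact mul_ne_zero (C_ne_zero.mpr ha) hp
    · rw [← totalDegree_map_eq (algebraMap K (AlgebraicClosure K)), hp₀,
        totalDegree_mul_of_isDomain (C_ne_zero.mpr ha) hp, totalDegree_C, zero_add]
      exact hpN
    · rw [← totalDegree_map_eq (algebraMap K (AlgebraicClosure K)), hq₀,
        totalDegree_mul_of_isDomain (C_ne_zero.mpr hb) hq, totalDegree_C, zero_add]
      exact hqN
    · refine (isDarb_map_iff (algebraMap K (AlgebraicClosure K)) A B k p₀ q₀).mp ?_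
      rw [hp₀, hq₀]
      exact IsDarb.C_mul_C_mul a b hD

end
end ExtacticPaper
end
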